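/- In the cycle-plus-tree setting, suppose G is periodic and deg(v_1)=…=deg(v_t)=2, deg(w_1)=…=deg(w_t)=2. Then for every 1 ≤ i ≤ t: (1) 2^{2i}·K_{2i} is an integer; (2) 2^{2(i−1)−1}·L_{2(i−1)}(2) is an integer; and (3) for every 2 ≤ j ≤ i−1, 2^{2(i−j)−1}·L_{2(i−j)}(2,…,j+1) is an integer. -/

import Mathlib

open Matrix

attribute [local instance] Classical.propDecidable

namespace GroverPaper

variable {V : Type*}

/-- The arc set of a simple graph: ordered pairs of adjacent vertices. -/
abbrev Arc (G : SimpleGraph V) : Type _ := {p : V × V // G.Adj p.1 p.2}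

/-- The time evolution matrix of the Grover walk on a graph `G`. -/
noncomputable def groverU [Fintype V] (G : SimpleGraph V) :
    Matrix (Arc G) (Arc G) ℂ := fun e f =>
  if f.val.2 = e.val.1 then
    if e.val = (f.val.2, f.val.1) then 2 / (G.degree f.val.2 : ℂ) - 1
    else 2 / (G.degree f.val.2 : ℂ)
  else 0

/-- A graph is periodic if some positive power of its Grover evolution is the identity. -/
def IsPeriodic [Fintype V] (G : SimpleGraph V) : Prop :=
  ∃ k : ℕ, 0 < k ∧ groverU G ^ k = 1

/-- The period of a periodic graph: the least positive `k` with `U^k = 1`. -/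
noncomputable def period [Fintype V] (G : SimpleGraph V) : ℕ :=
  sInf {k : ℕ | 0 < k ∧ groverU G ^ k = 1}

/-- A graph is `k`-periodic if it is periodic with period `k`. -/
def IsKPeriodic [Fintype V] (G : SimpleGraph V) (k : ℕ) : Prop :=
  IsPeriodic G ∧ period G = k

/-- A graph is odd-periodic if it is periodic with odd period. -/
def IsOddPeriodic [Fintype V] (G : SimpleGraph V) : Prop :=
  IsPeriodic G ∧ Odd (period G)

/-- The transition matrix of the isotropic random walk on `G`. -/
noncomputable def transition [Fintype V] (G : SimpleGraph V) :
    Matrix V V ℝ := fun u v =>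
  if G.Adj u v then 1 / (G.degree u : ℝ) else 0

/-- `M(e) = 1/(deg x · deg y)` for an edge `e = xy`. -/
noncomputable def edgeM [Fintype V] (G : SimpleGraph V) : Sym2 V → ℝ :=
  Sym2.lift ⟨fun x y => 1 / ((G.degree x : ℝ) * (G.degree y : ℝ)), fun x y => by simp [mul_comm]⟩

/-- The sum, over all `i`-matchings contained in the edge collection `A`, of the product of
the `M`-values of the matching. (For `i = 0` this is `1`; if there is no such matching it
is `0`.) -/
noncomputable def matchSum [Fintype V] (G : SimpleGraph V) (A : Finset (Sym2 V)) (i : ℕ) : ℝ :=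
  ∑ S ∈ A.powerset.filter (fun S => S.card = i ∧
      ∀ e ∈ S, ∀ f ∈ S, e ≠ f → ∀ x : V, ¬(x ∈ e ∧ x ∈ f)),
    ∏ e ∈ S, edgeM G e

/-- The edges of `G` that neither lie on the cycle `c 0 ∼ c 1 ∼ … ∼ c (k-1) ∼ c 0` nor are
incident to `u = c 0`; this is the edge set `E_T` of the paper. -/
noncomputable def treeEdges [Fintype V] {k : ℕ} (G : SimpleGraph V) (c : ZMod k → V) :
    Finset (Sym2 V) :=
  G.edgeFinset.filter fun e => (∀ i : ZMod k, e ≠ s(c i, c (i + 1))) ∧ c 0 ∉ e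

/-- `K_{2i}` of the paper: the sum over all `i`-matchings in `E_T` of the products of the
`M`-values. -/
noncomputable def Km [Fintype V] {k : ℕ} (G : SimpleGraph V) (c : ZMod k → V) (i : ℕ) : ℝ :=
  matchSum G (treeEdges G c) i

/-- `K^g_{2i}(2,…,r)` of the paper, where `v` is the path `u = v 0, v 1, v 2, …` so that
`g_j = v_{j-1} v_j`: the sum over all `i`-matchings in `E_T ∖ {g_2,…,g_r}`. -/
noncomputable def Kg [Fintype V] {k : ℕ} (G : SimpleGraph V) (c : ZMod k → V)
    (v : ℕ → V) (i r : ℕ) : ℝ :=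
  matchSum G (treeEdges G c \ (Finset.Icc 2 r).image fun j => s(v (j - 1), v j)) i

/-- `L_{2i}(2,…,r) = K^g_{2i}(2,…,r) + K^h_{2i}(2,…,r)` of the paper. -/
noncomputable def Lm [Fintype V] {k : ℕ} (G : SimpleGraph V) (c : ZMod k → V)
    (v w : ℕ → V) (i r : ℕ) : ℝ :=
  Kg G c v i r + Kg G c w i r

section Integrality

open Polynomial

variable [Fintype V]

/-- The transition matrix of the simple random walk with entries in a field `K`. -/
noncomputable def walkMatrix (K : Type*) [Field K] (G : SimpleGraph V) : Matrix V V K :=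
  fun x y => if G.Adj x y then 1 / (G.degree x : K) else 0

theorem walkMatrix_map {K L : Type*} [Field K] [Field L] (f : K →+* L) (G : SimpleGraph V) :
    (walkMatrix K G).map f = walkMatrix L G := by
  ext x y
  simp only [walkMatrix, Matrix.map_apply]
  split_ifs <;> simp

theorem sum_arc (G : SimpleGraph V) (g : V × V → ℂ) :
    ∑ f : Arc G, g f.val = ∑ x : V, ∑ y : V, if G.Adj x y then g (x, y) else 0 := by
  rw [← Fintype.sum_prod_type' (f := fun x y => if G.Adj x y then g (x, y) else 0)]
  rw [← Finset.sum_filter]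
  exact (Finset.sum_subtype _ (by simp) _).symm

theorem sum_adj_eq_degree (G : SimpleGraph V) (x : V) (a : ℂ) :
    ∑ y : V, (if G.Adj y x then a else 0) = G.degree x * a := by
  rw [← Finset.sum_filter, Finset.sum_const, nsmul_eq_mul,
    ← SimpleGraph.card_neighborFinset_eq_degree]
  congr 3
  ext y
  simp [SimpleGraph.adj_comm]

/-- The matrix sending a vertex function to its values at the heads of arcs. -/
noncomputable def headMatrix (G : SimpleGraph V) : Matrix (Arc G) V ℂ :=
  fun e x => if e.val.2 = x then 1 else 0

/-- The matrix sending a vertex function to its values at the tails of arcs. -/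
noncomputable def tailMatrix (G : SimpleGraph V) : Matrix (Arc G) V ℂ :=
  fun e x => if e.val.1 = x then 1 else 0

/-- The matrix sending an arc function to twice its mean over the arcs entering a vertex. -/
noncomputable def meanMatrix (G : SimpleGraph V) : Matrix V (Arc G) ℂ :=
  fun x f => if f.val.2 = x then 2 / (G.degree x : ℂ) else 0

/-- The arc reversal matrix. -/
noncomputable def flipMatrix (G : SimpleGraph V) : Matrix (Arc G) (Arc G) ℂ :=
  fun e f => if e.val = (f.val.2, f.val.1) then 1 else 0

theorem groverU_eq (G : SimpleGraph V) :
    groverU G = tailMatrix G * meanMatrix G - flipMatrix G := by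
  ext e f
  obtain ⟨⟨a, b⟩, hab⟩ := e
  obtain ⟨⟨c, d⟩, hcd⟩ := f
  simp only [groverU, Matrix.sub_apply, Matrix.mul_apply, tailMatrix, meanMatrix, flipMatrix,
    Prod.mk.injEq, ite_mul, one_mul, zero_mul, Finset.sum_ite_eq, Finset.mem_univ, if_true]
  by_cases h : d = a
  · subst h
    by_cases h2 : b = c <;> simp [h2]
  · simp [h, Ne.symm h]

theorem meanMatrix_mul_headMatrix (G : SimpleGraph V) (hdeg : ∀ x, 0 < G.degree x) :
    meanMatrix G * headMatrix G = (2 : ℂ) • 1 := by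
  ext x y
  simp only [Matrix.mul_apply, meanMatrix, headMatrix, Matrix.smul_apply, Matrix.one_apply]
  rw [sum_arc G (fun p =>
      (if p.2 = x then 2 / (G.degree x : ℂ) else 0) * if p.2 = y then 1 else 0),
    Finset.sum_comm, Finset.sum_eq_single x]
  · have := (hdeg x).ne'
    have h := sum_adj_eq_degree G x (2 / (G.degree x : ℂ) * if x = y then 1 else 0)
    simp only [if_true]
    rw [h]
    split_ifs <;> simp
    field_simp
  · intro b _ hb
    simp [hb]
  · simp

theorem meanMatrix_mul_tailMatrix (G : SimpleGraph V) :
    meanMatrix G * tailMatrix G = (2 : ℂ) • walkMatrix ℂ G := by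
  ext x y
  simp only [Matrix.mul_apply, meanMatrix, tailMatrix, Matrix.smul_apply, walkMatrix]
  rw [sum_arc G (fun p =>
      (if p.2 = x then 2 / (G.degree x : ℂ) else 0) * if p.1 = y then 1 else 0),
    Finset.sum_eq_single y, Finset.sum_eq_single x]
  · simp only [if_true, G.adj_comm y x]
    split_ifs <;> simp [div_eq_mul_inv]
  · intro b _ hb
    simp [hb]
  · simp
  · intro b _ hb
    simp [hb]
  · simp

theorem flipMatrix_mul (G : SimpleGraph V) {n : Type*} (M : Matrix (Arc G) n ℂ) (e : Arc G)
    (x : n) :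
    (flipMatrix G * M) e x = M ⟨(e.val.2, e.val.1), e.prop.symm⟩ x := by
  rw [Matrix.mul_apply, Finset.sum_eq_single ⟨(e.val.2, e.val.1), e.prop.symm⟩]
  · simp [flipMatrix]
  · rintro ⟨⟨a, b⟩, h⟩ _ hb
    have : e.val ≠ (b, a) := by
      intro h'
      apply hb
      simp [h']
    simp [flipMatrix, this]
  · simp

theorem flipMatrix_mul_headMatrix (G : SimpleGraph V) :
    flipMatrix G * headMatrix G = tailMatrix G := by
  ext e x
  simp [flipMatrix_mul, headMatrix, tailMatrix]

theorem flipMatrix_mul_tailMatrix (G : SimpleGraph V) :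
    flipMatrix G * tailMatrix G = headMatrix G := by
  ext e x
  simp [flipMatrix_mul, headMatrix, tailMatrix]

theorem isIntegral_walkMatrix (G : SimpleGraph V) (hdeg : ∀ x, 0 < G.degree x)
    (hper : IsPeriodic G) : IsIntegral ℤ ((2 : ℂ) • walkMatrix ℂ G) := by
  obtain ⟨N, hN, hU⟩ := hper
  set U := groverU G with hUdef
  have hint : IsIntegral ℤ U := ⟨X ^ N - 1, monic_X_pow_sub_C 1 hN.ne', by simp [hU]⟩
  have hZ : IsIntegral ℤ (U + U ^ (N - 1)) := by
    refine IsIntegral.of_mem_of_fg (Algebra.adjoin ℤ {U}) hint.fg_adjoin_singleton _ ?_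
    have := Algebra.self_mem_adjoin_singleton ℤ U
    exact add_mem this (pow_mem this _)
  have hWU : U ^ (N - 1) * U = 1 := by rw [← pow_succ, Nat.sub_add_cancel hN, hU]
  have h1 : U * headMatrix G = tailMatrix G := by
    rw [hUdef, groverU_eq, Matrix.sub_mul, Matrix.mul_assoc, meanMatrix_mul_headMatrix G hdeg,
      flipMatrix_mul_headMatrix, Matrix.mul_smul, Matrix.mul_one, two_smul, add_sub_cancel_right]
  have h2 : U * tailMatrix G = tailMatrix G * ((2 : ℂ) • walkMatrix ℂ G) - headMatrix G := by
    rw [hUdef, groverU_eq, Matrix.sub_mul, Matrix.mul_assoc, meanMatrix_mul_tailMatrix,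
      flipMatrix_mul_tailMatrix]
  have h3 : U ^ (N - 1) * tailMatrix G = headMatrix G := by
    rw [← h1, ← Matrix.mul_assoc, hWU, Matrix.one_mul]
  have h4 : (U + U ^ (N - 1)) * headMatrix G = headMatrix G * ((2 : ℂ) • walkMatrix ℂ G) := by
    have := congrArg (fun M => U ^ (N - 1) * M) h2
    simp only [Matrix.mul_sub, ← Matrix.mul_assoc, hWU, Matrix.one_mul, h3] at this
    rw [Matrix.add_mul, h1, this, sub_add_cancel]
  obtain ⟨p, hp, hpz⟩ := hZ
  refine ⟨p, hp, ?_⟩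
  rw [← aeval_def] at hpz ⊢
  have h5 : ∀ q : ℤ[X], aeval (U + U ^ (N - 1)) q * headMatrix G =
      headMatrix G * aeval ((2 : ℂ) • walkMatrix ℂ G) q := by
    intro q
    induction q using Polynomial.induction_on' with
    | add a b ha hb => simp only [map_add, Matrix.add_mul, Matrix.mul_add, ha, hb]
    | monomial n a =>
      rw [← C_mul_X_pow_eq_monomial]
      simp only [map_mul, map_pow, aeval_X, eq_intCast, map_intCast]
      have : ∀ n : ℕ, (U + U ^ (N - 1)) ^ n * headMatrix G =
          headMatrix G * ((2 : ℂ) • walkMatrix ℂ G) ^ n := by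
        intro n
        induction n with
        | zero => simp
        | succ n ih =>
          rw [pow_succ', Matrix.mul_assoc, ih, ← Matrix.mul_assoc, h4, Matrix.mul_assoc,
            ← pow_succ']
      rw [Matrix.mul_assoc, this]
      simp only [← zsmul_one, Matrix.smul_mul, Matrix.mul_smul, Matrix.one_mul]
  have h6 := h5 p
  rw [hpz, Matrix.zero_mul] at h6
  ext x y
  have hx := hdeg x
  rw [G.degree_pos_iff_exists_adj] at hx
  obtain ⟨z, hz⟩ := hx
  have h7 := congrFun (congrFun h6 ⟨(z, x), hz.symm⟩) y
  simpa [Matrix.mul_apply, headMatrix] using h7.symm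

theorem charpolyRev_walkMatrix_int (G : SimpleGraph V) (hdeg : ∀ x, 0 < G.degree x)
    (hper : IsPeriodic G) (n : ℕ) :
    ∃ m : ℤ, ((2 : ℝ) • walkMatrix ℝ G).charpolyRev.coeff n = m := by
  have hmap : ∀ {K L : Type} [Field K] [Field L] (f : K →+* L),
      ((2 : K) • walkMatrix K G).map f = (2 : L) • walkMatrix L G := by
    intro K L _ _ f
    rw [← walkMatrix_map f G]
    ext x y
    simp [map_ofNat]
  have hC : ∀ n, IsIntegral ℤ (((2 : ℂ) • walkMatrix ℂ G).charpoly.coeff n) := by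
    refine isIntegral_coeff_of_factors _ ?_ (IsAlgClosed.splits _) ?_
    · rw [(charpoly_monic _).leadingCoeff]
      exact isIntegral_one
    · intro μ hμ
      obtain ⟨p, hp, hp0⟩ := isIntegral_walkMatrix G hdeg hper
      refine ⟨p, hp, ?_⟩
      have hev := spectrum.subset_polynomial_aeval ((2 : ℂ) • walkMatrix ℂ G)
        (p.map (algebraMap ℤ ℂ)) ⟨μ, Matrix.mem_spectrum_iff_isRoot_charpoly.2 hμ, rfl⟩
      rw [aeval_map_algebraMap, aeval_def, hp0] at hev
      by_contra hne
      refine hev ?_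
      simp only [eval_map]
      rw [spectrum.mem_resolventSet_iff, sub_zero]
      exact (IsUnit.mk0 _ hne).map (algebraMap ℂ (Matrix V V ℂ))
  have hQ : ∀ n, ∃ m : ℤ, ((2 : ℚ) • walkMatrix ℚ G).charpoly.coeff n = m := by
    intro n
    have h := hC n
    rw [← hmap (algebraMap ℚ ℂ), Matrix.charpoly_map, coeff_map] at h
    have h' := (isIntegral_algebraMap_iff (algebraMap ℚ ℂ).injective).1 h
    obtain ⟨m, hm⟩ := IsIntegrallyClosed.isIntegral_iff.1 h'
    exact ⟨m, by simpa using hm.symm⟩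
  have hrev : ((2 : ℝ) • walkMatrix ℝ G).charpolyRev.coeff n =
      ((2 : ℝ) • walkMatrix ℝ G).charpoly.coeff
        (revAt ((2 : ℝ) • walkMatrix ℝ G).charpoly.natDegree n) := by
    rw [← Matrix.reverse_charpoly, coeff_reverse]
  rw [hrev, ← hmap (algebraMap ℚ ℝ), Matrix.charpoly_map, coeff_map]
  obtain ⟨m, hm⟩ := hQ (revAt (((2 : ℚ) • walkMatrix ℚ G).charpoly.map
    (algebraMap ℚ ℝ)).natDegree n)
  exact ⟨m, by rw [hm]; simp⟩

end Integrality

section MatchingSums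

variable {R : Type*} [CommRing R]

/-- Edges of the collection are pairwise vertex-disjoint. -/
def IsMatch (S : Finset (Sym2 V)) : Prop :=
  ∀ e ∈ S, ∀ f ∈ S, e ≠ f → ∀ x : V, ¬(x ∈ e ∧ x ∈ f)

/-- The sum over all matchings inside `A` of the products of the weights. -/
noncomputable def matchPoly (wt : Sym2 V → R) (A : Finset (Sym2 V)) : R :=
  ∑ S ∈ A.powerset.filter IsMatch, ∏ e ∈ S, wt e

/-- The edges of `A` having no vertex in common with `e`. -/
noncomputable def offEdge (A : Finset (Sym2 V)) (e : Sym2 V) : Finset (Sym2 V) :=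
  A.filter fun f => ∀ x : V, ¬(x ∈ e ∧ x ∈ f)

theorem IsMatch.subset {S T : Finset (Sym2 V)} (h : IsMatch T) (hST : S ⊆ T) : IsMatch S :=
  fun e he f hf => h e (hST he) f (hST hf)

theorem isMatch_insert {S : Finset (Sym2 V)} {e : Sym2 V} (he : e ∉ S) :
    IsMatch (insert e S) ↔ IsMatch S ∧ ∀ f ∈ S, ∀ x : V, ¬(x ∈ e ∧ x ∈ f) := by
  constructor
  · intro h
    refine ⟨h.subset (Finset.subset_insert _ _), fun f hf => ?_⟩
    exact h e (Finset.mem_insert_self _ _) f (Finset.mem_insert_of_mem hf)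
      (fun h' => he (h' ▸ hf))
  · rintro ⟨h1, h2⟩ a ha b hb hab x ⟨hxa, hxb⟩
    rw [Finset.mem_insert] at ha hb
    rcases ha with rfl | ha <;> rcases hb with rfl | hb
    · exact hab rfl
    · exact h2 b hb x ⟨hxa, hxb⟩
    · exact h2 a ha x ⟨hxb, hxa⟩
    · exact h1 a ha b hb hab x ⟨hxa, hxb⟩

theorem matchPoly_insert (wt : Sym2 V → R) {A : Finset (Sym2 V)} {e : Sym2 V} (he : e ∉ A) :
    matchPoly wt (insert e A) = matchPoly wt A + wt e * matchPoly wt (offEdge A e) := by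
  rw [matchPoly, Finset.powerset_insert, Finset.filter_union, Finset.sum_union, matchPoly]
  · congr 1
    rw [matchPoly, Finset.mul_sum]
    symm
    refine Finset.sum_bij (fun S _ => insert e S) ?_ ?_ ?_ ?_
    · intro S hS
      simp only [Finset.mem_filter, Finset.mem_powerset, Finset.mem_image] at hS ⊢
      have hSA : S ⊆ A := hS.1.trans (Finset.filter_subset _ _)
      refine ⟨⟨S, hSA, rfl⟩, (isMatch_insert (fun h => he (hSA h))).2 ⟨hS.2, fun f hf => ?_⟩⟩
      exact (Finset.mem_filter.1 (hS.1 hf)).2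
    · intro S hS T hT h
      simp only [Finset.mem_filter, Finset.mem_powerset] at hS hT
      have h1 : e ∉ S := fun h => he (Finset.filter_subset _ _ (hS.1 h))
      have h2 : e ∉ T := fun h => he (Finset.filter_subset _ _ (hT.1 h))
      rw [← Finset.erase_insert h1, h, Finset.erase_insert h2]
    · intro T hT
      simp only [Finset.mem_filter, Finset.mem_powerset, Finset.mem_image] at hT
      obtain ⟨⟨S, hS, rfl⟩, hM⟩ := hT
      have hm := (isMatch_insert (fun h => he (hS h))).1 hM
      refine ⟨S, ?_, rfl⟩
      simp only [Finset.mem_filter, Finset.mem_powerset]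
      exact ⟨fun f hf => Finset.mem_filter.2 ⟨hS hf, hm.2 f hf⟩, hm.1⟩
    · intro S hS
      simp only [Finset.mem_filter, Finset.mem_powerset] at hS
      rw [Finset.prod_insert]
      exact fun h => he (Finset.filter_subset _ _ (hS.1 h))
  · rw [Finset.disjoint_left]
    intro S h1 h2
    simp only [Finset.mem_filter, Finset.mem_powerset, Finset.mem_image] at h1 h2
    obtain ⟨⟨T, _, rfl⟩, _⟩ := h2
    exact he (h1.1 (Finset.mem_insert_self _ _))

theorem matchPoly_empty (wt : Sym2 V → R) : matchPoly wt ∅ = 1 := by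
  have h : IsMatch (∅ : Finset (Sym2 V)) := by simp [IsMatch]
  simp [matchPoly, Finset.filter_singleton, h]

theorem offEdge_union (A B : Finset (Sym2 V)) (e : Sym2 V) :
    offEdge (A ∪ B) e = offEdge A e ∪ offEdge B e := Finset.filter_union _ _ _

theorem offEdge_eq_self {A : Finset (Sym2 V)} {e : Sym2 V}
    (h : ∀ f ∈ A, ∀ x : V, ¬(x ∈ e ∧ x ∈ f)) : offEdge A e = A :=
  Finset.filter_true_of_mem h

theorem offEdge_eq_of_forall {A B : Finset (Sym2 V)} {e : Sym2 V}
    (h : ∀ f, f ∈ B ↔ f ∈ A ∧ ∀ x, x ∈ e → x ∉ f) : offEdge A e = B := by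
  ext f
  rw [h, offEdge, Finset.mem_filter]
  simp only [not_and]

theorem offEdge_subset (A : Finset (Sym2 V)) (e : Sym2 V) : offEdge A e ⊆ A :=
  Finset.filter_subset _ _

theorem offEdge_insert_of_mem {A : Finset (Sym2 V)} {e f : Sym2 V} {x : V} (he : x ∈ e)
    (hf : x ∈ f) : offEdge (insert f A) e = offEdge A e := by
  rw [offEdge, Finset.filter_insert, if_neg (fun h => h x ⟨he, hf⟩)]
  rfl

theorem matchPoly_union (wt : Sym2 V → R) {A B : Finset (Sym2 V)} (hA : ∀ e ∈ A, ∃ x, x ∈ e)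
    (h : ∀ e ∈ A, ∀ f ∈ B, ∀ x : V, ¬(x ∈ e ∧ x ∈ f)) :
    matchPoly wt (A ∪ B) = matchPoly wt A * matchPoly wt B := by
  induction hn : A.card using Nat.strong_induction_on generalizing A with
  | _ n ih =>
    rcases A.eq_empty_or_nonempty with rfl | ⟨e, he⟩
    · rw [matchPoly_empty, Finset.empty_union, one_mul]
    · have hlt : (A.erase e).card < n := hn ▸ Finset.card_erase_lt_of_mem he
      have hle : (offEdge (A.erase e) e).card < n :=
        (Finset.card_le_card (offEdge_subset _ _)).trans_lt hlt
      have hsub : A.erase e ⊆ A := Finset.erase_subset _ _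
      have hsub2 : offEdge (A.erase e) e ⊆ A := (offEdge_subset _ _).trans hsub
      have heB : e ∉ B := fun h' => by
        obtain ⟨x, hx⟩ := hA e he
        exact h e he e h' x ⟨hx, hx⟩
      rw [← Finset.insert_erase he, Finset.insert_union, matchPoly_insert, matchPoly_insert,
        offEdge_union, offEdge_eq_self (h e he),
        ih _ hlt (fun f hf => hA f (hsub hf)) (fun f hf => h f (hsub hf)) rfl,
        ih _ hle (fun f hf => hA f (hsub2 hf)) (fun f hf => h f (hsub2 hf)) rfl]
      · ring
      · simp
      · simp [heB]

theorem matchPoly_congr {wt wt' : Sym2 V → R} {A : Finset (Sym2 V)} (h : ∀ e ∈ A, wt e = wt' e) :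
    matchPoly wt A = matchPoly wt' A := by
  refine Finset.sum_congr rfl fun S hS => Finset.prod_congr rfl fun e he => h e ?_
  exact Finset.mem_powerset.1 (Finset.mem_filter.1 hS).1 he

theorem isMatch_image (r : Equiv.Perm V) {S : Finset (Sym2 V)} (h : IsMatch S) :
    IsMatch (S.image (Sym2.map r)) := by
  intro a ha b hb hab x
  rw [Finset.mem_image] at ha hb
  obtain ⟨e, he, rfl⟩ := ha
  obtain ⟨f, hf, rfl⟩ := hb
  rw [Sym2.mem_map, Sym2.mem_map]
  rintro ⟨⟨y, hy, rfl⟩, ⟨z, hz, hzy⟩⟩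
  rw [r.injective hzy] at hz
  exact h e he f hf (fun h => hab (h ▸ rfl)) y ⟨hy, hz⟩

theorem matchPoly_image (wt : Sym2 V → R) (r : Equiv.Perm V) (A : Finset (Sym2 V)) :
    matchPoly wt (A.image (Sym2.map r)) = matchPoly (fun e => wt (Sym2.map r e)) A := by
  symm
  have hinj := Sym2.map.injective r.injective
  refine Finset.sum_bij (fun S _ => S.image (Sym2.map r)) ?_ ?_ ?_ ?_
  · intro S hS
    simp only [Finset.mem_filter, Finset.mem_powerset] at hS ⊢
    exact ⟨Finset.image_subset_image hS.1, isMatch_image r hS.2⟩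
  · intro S _ T _ h
    exact Finset.image_injective hinj h
  · intro T hT
    simp only [Finset.mem_filter, Finset.mem_powerset] at hT
    have hid : ∀ U : Finset (Sym2 V), (U.image (Sym2.map r.symm)).image (Sym2.map r) = U := by
      intro U
      rw [Finset.image_image, Sym2.map_comp.symm]
      simp
    refine ⟨T.image (Sym2.map r.symm), ?_, hid T⟩
    simp only [Finset.mem_filter, Finset.mem_powerset]
    refine ⟨?_, isMatch_image r.symm hT.2⟩
    have := Finset.image_subset_image (f := Sym2.map r.symm) hT.1
    rw [Finset.image_image, Sym2.map_comp.symm] at this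
    simpa using this
  · intro S _
    rw [Finset.prod_image (fun a _ b _ h => hinj h)]

theorem matchPoly_map {S : Type*} [CommRing S] (f : R →+* S) (wt : Sym2 V → R)
    (A : Finset (Sym2 V)) : f (matchPoly wt A) = matchPoly (fun e => f (wt e)) A := by
  simp [matchPoly]

end MatchingSums

section Involutions

open Equiv

theorem mk_apply_eq_of_mem {σ : Perm V} (hσ : ∀ v, σ (σ v) = v) {v x : V} (hx : x ∈ s(v, σ v)) :
    s(v, σ v) = s(x, σ x) := by
  rcases Sym2.mem_iff.1 hx with rfl | rfl
  · rfl
  · rw [hσ, Sym2.eq_swap]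

variable [Fintype V] {R : Type*} [CommRing R]

/-- The involutions of the vertex set all of whose transposed pairs lie in `A`. -/
noncomputable def edgeInvolutions (A : Finset (Sym2 V)) : Finset (Perm V) :=
  Finset.univ.filter fun σ => ∀ v, σ (σ v) = v ∧ (σ v = v ∨ s(v, σ v) ∈ A)

theorem mem_edgeInvolutions {A : Finset (Sym2 V)} {σ : Perm V} :
    σ ∈ edgeInvolutions A ↔ ∀ v, σ (σ v) = v ∧ (σ v = v ∨ s(v, σ v) ∈ A) := by
  simp [edgeInvolutions]

/-- The term of the Leibniz formula for `det N` belonging to `σ`. -/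
noncomputable def detTerm (N : Matrix V V R) (σ : Perm V) : R :=
  ((Perm.sign σ : ℤ) : R) * ∏ v, N (σ v) v

/-- The pairs transposed by an involution. -/
noncomputable def movedPairs (σ : Perm V) : Finset (Sym2 V) :=
  σ.support.image fun v => s(v, σ v)

theorem fiber_movedPairs {σ : Perm V} (hσ : ∀ v, σ (σ v) = v) {v : V} (hv : v ∈ σ.support) :
    (σ.support.filter fun x => s(x, σ x) = s(v, σ v)) = {v, σ v} := by
  ext x
  simp only [Finset.mem_filter, Finset.mem_insert, Finset.mem_singleton]
  constructor
  · rintro ⟨_, h⟩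
    exact Sym2.mem_iff.1 (h ▸ Sym2.mem_mk_left x (σ x))
  · intro h
    refine ⟨?_, (mk_apply_eq_of_mem hσ (Sym2.mem_iff.2 h)).symm⟩
    rcases h with rfl | rfl
    · exact hv
    · exact Perm.apply_mem_support.2 hv

theorem sign_eq_pow_card_movedPairs {σ : Perm V} (hσ : ∀ v, σ (σ v) = v) :
    Perm.sign σ = (-1) ^ (movedPairs σ).card := by
  have hσ2 : σ ^ 2 = 1 := by
    ext v
    simp [pow_two, hσ]
  have hct := Perm.cycleType_of_pow_prime_eq_one hσ2
  have hsum : σ.cycleType.sum = σ.cycleType.card * 2 := by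
    conv_lhs => rw [hct]
    simp
  have hcard : σ.support.card = (movedPairs σ).card * 2 := by
    rw [Finset.card_eq_sum_card_fiberwise (f := fun v => s(v, σ v)) (t := movedPairs σ)
      (fun v hv => Finset.mem_coe.2 (Finset.mem_image_of_mem _ hv)), Finset.sum_const_nat]
    intro e he
    obtain ⟨v, hv, rfl⟩ := Finset.mem_image.1 he
    rw [fiber_movedPairs hσ hv, Finset.card_pair]
    exact (Perm.mem_support.1 hv).symm
  have h : σ.cycleType.card = (movedPairs σ).card := by
    have := Perm.sum_cycleType σ
    omega
  rw [Perm.sign_of_cycleType, hsum, h, pow_add, pow_mul']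
  simp

theorem detTerm_eq_prod_movedPairs {N : Matrix V V R} (hN : ∀ v, N v v = 1)
    {A : Finset (Sym2 V)} {wt : Sym2 V → R}
    (hwt : ∀ a b, s(a, b) ∈ A → wt s(a, b) = -(N a b * N b a)) {σ : Perm V}
    (hσ : σ ∈ edgeInvolutions A) : detTerm N σ = ∏ e ∈ movedPairs σ, wt e := by
  rw [mem_edgeInvolutions] at hσ
  have hinv : ∀ v, σ (σ v) = v := fun v => (hσ v).1
  have h1 : ∏ v, N (σ v) v = ∏ v ∈ σ.support, N (σ v) v := by
    symm
    refine Finset.prod_subset (Finset.subset_univ _) fun v _ hv => ?_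
    rw [Perm.notMem_support.1 hv, hN]
  have h2 : ∏ v ∈ σ.support, N (σ v) v = ∏ e ∈ movedPairs σ, -wt e := by
    rw [← Finset.prod_fiberwise_of_maps_to (g := fun v => s(v, σ v)) (t := movedPairs σ)
      (fun v hv => Finset.mem_image_of_mem _ hv)]
    refine Finset.prod_congr rfl fun e he => ?_
    obtain ⟨v, hv, rfl⟩ := Finset.mem_image.1 he
    have hv' := Perm.mem_support.1 hv
    rw [fiber_movedPairs hinv hv, Finset.prod_pair hv'.symm, hinv,
      hwt _ _ ((hσ v).2.resolve_left hv')]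
    ring
  rw [detTerm, sign_eq_pow_card_movedPairs hinv, h1, h2, Finset.prod_neg]
  push_cast
  rw [← mul_assoc, ← mul_pow]
  simp

theorem isMatch_movedPairs {σ : Perm V} (hσ : ∀ v, σ (σ v) = v) : IsMatch (movedPairs σ) := by
  intro e he f hf hef x hx
  obtain ⟨a, -, rfl⟩ := Finset.mem_image.1 he
  obtain ⟨b, -, rfl⟩ := Finset.mem_image.1 hf
  exact hef ((mk_apply_eq_of_mem hσ hx.1).trans (mk_apply_eq_of_mem hσ hx.2).symm)

theorem apply_eq_of_mem_movedPairs {σ : Perm V} (hσ : ∀ v, σ (σ v) = v) {v y : V}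
    (h : s(v, y) ∈ movedPairs σ) : σ v = y := by
  obtain ⟨b, -, hb⟩ := Finset.mem_image.1 h
  have hv : v ∈ s(b, σ b) := by
    rw [hb]
    exact Sym2.mem_mk_left v y
  rw [mk_apply_eq_of_mem hσ hv] at hb
  exact Sym2.congr_right.1 hb

theorem exists_involution_of_isMatch {S : Finset (Sym2 V)} (hS : IsMatch S)
    (hloop : ∀ e ∈ S, ¬e.IsDiag) :
    ∃ σ : Perm V, (∀ v, σ (σ v) = v ∧ (σ v = v ∨ s(v, σ v) ∈ S)) ∧ movedPairs σ = S := by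
  have huniq : ∀ v y z, s(v, y) ∈ S → s(v, z) ∈ S → y = z := by
    intro v y z hy hz
    by_contra hne
    exact hS _ hy _ hz (fun h => hne (Sym2.congr_right.1 h)) v
      ⟨Sym2.mem_mk_left _ _, Sym2.mem_mk_left _ _⟩
  let f : V → V := fun v => if h : ∃ y, s(v, y) ∈ S then h.choose else v
  have hf1 : ∀ v y, s(v, y) ∈ S → f v = y := by
    intro v y h
    have h' : ∃ y, s(v, y) ∈ S := ⟨y, h⟩
    simp only [f, dif_pos h']
    exact huniq v _ _ h'.choose_spec h
  have hf2 : ∀ v, f v = v ∨ s(v, f v) ∈ S := by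
    intro v
    by_cases h' : ∃ y, s(v, y) ∈ S
    · right
      obtain ⟨y, hy⟩ := h'
      rwa [hf1 v y hy]
    · left
      simp only [f, dif_neg h']
  have hinv : Function.Involutive f := by
    intro v
    rcases hf2 v with h | h
    · rw [h, h]
    · exact hf1 _ _ (by rwa [Sym2.eq_swap])
  refine ⟨hinv.toPerm, fun v => ⟨hinv v, hf2 v⟩, ?_⟩
  ext e
  simp only [movedPairs, Finset.mem_image, Perm.mem_support, Function.Involutive.coe_toPerm]
  constructor
  · rintro ⟨v, hv, rfl⟩
    exact (hf2 v).resolve_left hv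
  · intro he
    induction e with
    | h a b =>
      refine ⟨a, ?_, by rw [hf1 a b he]⟩
      rw [hf1 a b he]
      intro h
      exact hloop _ he (by simp [h])

theorem sum_detTerm_edgeInvolutions {N : Matrix V V R} (hN : ∀ v, N v v = 1)
    {A : Finset (Sym2 V)} (hloop : ∀ e ∈ A, ¬e.IsDiag) {wt : Sym2 V → R}
    (hwt : ∀ a b, s(a, b) ∈ A → wt s(a, b) = -(N a b * N b a)) :
    ∑ σ ∈ edgeInvolutions A, detTerm N σ = matchPoly wt A := by
  refine Finset.sum_bij (fun σ _ => movedPairs σ) ?_ ?_ ?_ ?_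
  · intro σ hσ
    rw [mem_edgeInvolutions] at hσ
    rw [Finset.mem_filter, Finset.mem_powerset]
    refine ⟨fun e he => ?_, isMatch_movedPairs fun v => (hσ v).1⟩
    obtain ⟨v, hv, rfl⟩ := Finset.mem_image.1 he
    exact (hσ v).2.resolve_left (Perm.mem_support.1 hv)
  · intro σ hσ τ hτ h
    rw [mem_edgeInvolutions] at hσ hτ
    ext v
    by_cases h1 : σ v = v
    · by_cases h2 : τ v = v
      · rw [h1, h2]
      · have : s(v, τ v) ∈ movedPairs τ := Finset.mem_image.2 ⟨v, Perm.mem_support.2 h2, rfl⟩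
        rw [← h] at this
        exact apply_eq_of_mem_movedPairs (fun v => (hσ v).1) this
    · have : s(v, σ v) ∈ movedPairs σ := Finset.mem_image.2 ⟨v, Perm.mem_support.2 h1, rfl⟩
      rw [h] at this
      exact (apply_eq_of_mem_movedPairs (fun v => (hτ v).1) this).symm
  · intro S hS
    rw [Finset.mem_filter, Finset.mem_powerset] at hS
    obtain ⟨σ, h1, h2⟩ := exists_involution_of_isMatch hS.2 fun e he => hloop e (hS.1 he)
    exact ⟨σ, mem_edgeInvolutions.2 fun v => ⟨(h1 v).1, (h1 v).2.imp_right fun h => hS.1 h⟩, h2⟩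
  · intro σ hσ
    exact detTerm_eq_prod_movedPairs hN hwt hσ

end Involutions

section Unicyclic

theorem exists_walk_edges_eq_map_range {H : SimpleGraph V} (n : ℕ) (x : ℕ → V)
    (hadj : ∀ s < n, H.Adj (x s) (x (s + 1))) :
    ∃ p : H.Walk (x 0) (x n), p.edges = (List.range n).map fun s => s(x s, x (s + 1)) := by
  induction n with
  | zero => exact ⟨SimpleGraph.Walk.nil, rfl⟩
  | succ n ih =>
    obtain ⟨p, hp⟩ := ih fun s hs => hadj s (by omega)
    refine ⟨p.concat (hadj n (by omega)), ?_⟩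
    rw [SimpleGraph.Walk.edges_concat, hp, List.range_succ]
    simp

/-- A nonbacktracking walk in an acyclic graph does not return to its start. -/
theorem ne_of_isAcyclic_of_nonbacktracking {H : SimpleGraph V} (hH : H.IsAcyclic) {n : ℕ}
    (hn : 1 ≤ n) (x : ℕ → V) (hadj : ∀ s < n, H.Adj (x s) (x (s + 1)))
    (hnb : ∀ s, s + 2 ≤ n → x (s + 2) ≠ x s) : x 0 ≠ x n := by
  obtain ⟨p, hp⟩ := exists_walk_edges_eq_map_range n x hadj
  have hpath : p.IsPath := by
    rw [hH.isPath_iff_isChain, hp, List.isChain_map]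
    rw [List.isChain_iff_getElem]
    intro i hi h
    simp only [List.length_range] at hi
    simp only [List.getElem_range] at h
    rw [Sym2.eq_iff] at h
    rcases h with h | h
    · exact (hadj i (by omega)).ne h.1
    · exact hnb i (by omega) h.1.symm
  intro h
  have hlen : p.length = n := by
    rw [← SimpleGraph.Walk.length_edges, hp]
    simp
  have := SimpleGraph.Walk.length_eq_zero_iff.2 (hpath.nil_iff_eq.2 h)
  omega

variable [Fintype V] {G : SimpleGraph V} {k : ℕ} {c : ZMod k → V}

theorem two_ne_zero_zmod (hk3 : 3 ≤ k) : (2 : ZMod k) ≠ 0 := by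
  intro h
  have h2 : ((2 : ℕ) : ZMod k) = 0 := by exact_mod_cast h
  have := Nat.le_of_dvd (by norm_num) ((ZMod.natCast_eq_zero_iff 2 k).1 h2)
  omega

theorem isAcyclic_deleteEdges_cycle (hconn : G.Connected) (hk3 : 3 ≤ k)
    (hcinj : Function.Injective c) (hcadj : ∀ i, G.Adj (c i) (c (i + 1)))
    (hcard : Nat.card V = Nat.card G.edgeSet) (j : ZMod k) :
    (G.deleteEdges {s(c j, c (j + 1))}).IsAcyclic := by
  have hreach : ∀ n : ℕ, n ≤ k - 1 →
      (G.deleteEdges {s(c j, c (j + 1))}).Reachable (c (j + 1)) (c (j + 1 + n)) := by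
    intro n
    induction n with
    | zero => simp
    | succ n ih =>
      intro hn
      refine (ih (by omega)).trans (SimpleGraph.Adj.reachable ?_)
      rw [SimpleGraph.deleteEdges_adj]
      refine ⟨?_, ?_⟩
      · have := hcadj (j + 1 + n)
        rwa [Nat.cast_succ, ← add_assoc]
      · intro h
        rw [Set.mem_singleton_iff, Sym2.eq_iff] at h
        rcases h with ⟨h, -⟩ | ⟨h1, h2⟩
        · have h' := hcinj h
          have : ((n + 1 : ℕ) : ZMod k) = 0 := by
            push_cast
            linear_combination h'
          have := Nat.le_of_dvd (by omega) ((ZMod.natCast_eq_zero_iff _ k).1 this)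
          omega
        · have h1' := hcinj h1
          have h2' := hcinj h2
          push_cast at h2'
          exact two_ne_zero_zmod hk3 (by linear_combination h2' - h1')
  have hnb : ¬G.IsBridge s(c j, c (j + 1)) := by
    rw [SimpleGraph.isBridge_iff, not_not]
    have h := hreach (k - 1) le_rfl
    have h' : j + 1 + ((k - 1 : ℕ) : ZMod k) = j := by
      rw [Nat.cast_sub (by omega)]
      simp
    rw [h'] at h
    exact h.symm
  have hconn' := hconn.connected_delete_edge_of_not_isBridge hnb
  refine (SimpleGraph.isTree_iff_connected_and_card.2 ⟨hconn', ?_⟩).isAcyclic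
  rw [hcard, SimpleGraph.edgeSet_deleteEdges]
  exact Set.ncard_sdiff_singleton_add_one (G.mem_edgeSet.2 (hcadj j))

theorem exists_pow_mem_cycle_edge (hconn : G.Connected) (hk3 : 3 ≤ k)
    (hcinj : Function.Injective c) (hcadj : ∀ i, G.Adj (c i) (c (i + 1)))
    (hcard : Nat.card V = Nat.card G.edgeSet) {σ : Equiv.Perm V}
    (hσ : ∀ v, σ v = v ∨ G.Adj v (σ v)) {v : V} (hv : σ (σ v) ≠ v) (j : ZMod k) :
    ∃ n : ℕ, s((σ ^ n) v, (σ ^ (n + 1)) v) = s(c j, c (j + 1)) := by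
  by_contra hne
  push Not at hne
  have hac := isAcyclic_deleteEdges_cycle hconn hk3 hcinj hcadj hcard j
  refine ne_of_isAcyclic_of_nonbacktracking hac (n := orderOf σ) (orderOf_pos σ)
    (fun n => (σ ^ n) v) ?_ ?_ ?_
  · intro s _
    rw [SimpleGraph.deleteEdges_adj]
    refine ⟨?_, hne s⟩
    have h := (hσ ((σ ^ s) v)).resolve_left ?_
    · rwa [pow_succ', Equiv.Perm.mul_apply]
    · intro h
      rw [← Equiv.Perm.mul_apply, ← pow_succ', pow_succ, Equiv.Perm.mul_apply] at h
      have h' := (σ ^ s).injective h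
      exact hv (by rw [h', h'])
  · intro s _ h
    simp only [pow_add, Equiv.Perm.mul_apply] at h
    exact hv ((σ ^ s).injective h)
  · simp [pow_orderOf_eq_one]

theorem apply_cycle_of_not_involutive [NeZero k] (hconn : G.Connected) (hk3 : 3 ≤ k)
    (hcinj : Function.Injective c) (hcadj : ∀ i, G.Adj (c i) (c (i + 1)))
    (hcard : Nat.card V = Nat.card G.edgeSet) {σ : Equiv.Perm V}
    (hσ : ∀ v, σ v = v ∨ G.Adj v (σ v)) {v : V} (hv : σ (σ v) ≠ v) :
    (∀ i, σ (c i) = c (i + 1)) ∨ ∀ i, σ (c (i + 1)) = c i := by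
  have hstep : ∀ j, σ (c j) = c (j + 1) ∨ σ (c (j + 1)) = c j := by
    intro j
    obtain ⟨n, hn⟩ := exists_pow_mem_cycle_edge hconn hk3 hcinj hcadj hcard hσ hv j
    rw [pow_succ', Equiv.Perm.mul_apply, Sym2.eq_iff] at hn
    rcases hn with ⟨h1, h2⟩ | ⟨h1, h2⟩
    · left
      rw [← h1, h2]
    · right
      rw [← h1, h2]
  have hne : ∀ i : ZMod k, c (i + 1 + 1) ≠ c i := fun i h =>
    two_ne_zero_zmod hk3 (by linear_combination hcinj h)
  rcases hstep 0 with h0 | h0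
  · left
    have h : ∀ n : ℕ, σ (c n) = c (n + 1) := by
      intro n
      induction n with
      | zero => simpa using h0
      | succ n ih =>
        rw [Nat.cast_succ]
        refine (hstep (n + 1)).resolve_right fun h => ?_
        exact hne _ (σ.injective (h.trans ih.symm))
    intro i
    simpa using h i.val
  · right
    have h : ∀ n : ℕ, σ (c (n + 1)) = c n := by
      intro n
      induction n with
      | zero => simpa using h0
      | succ n ih =>
        rw [Nat.cast_succ]
        refine (hstep (n + 1)).resolve_left fun h => ?_
        exact hne _ (h.symm.trans ih)
    intro i
    simpa using h i.val

theorem mem_treeEdges {e : Sym2 V} :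
    e ∈ treeEdges G c ↔ e ∈ G.edgeSet ∧ (∀ i, e ≠ s(c i, c (i + 1))) ∧ c 0 ∉ e := by
  simp [treeEdges]

theorem not_mem_range_of_mem_treeEdges [NeZero k] (hk3 : 3 ≤ k) (hcinj : Function.Injective c)
    (hcadj : ∀ i, G.Adj (c i) (c (i + 1))) (hdegc : ∀ i, i ≠ 0 → G.degree (c i) = 2)
    {e : Sym2 V} (he : e ∈ treeEdges G c) (i : ZMod k) : c i ∉ e := by
  rw [mem_treeEdges] at he
  obtain ⟨hE, hcyc, h0⟩ := he
  by_cases hi : i = 0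
  · rwa [hi]
  intro hmem
  obtain ⟨y, rfl⟩ := Sym2.mem_iff_exists.1 hmem
  rw [SimpleGraph.mem_edgeSet] at hE
  have hsub : ({c (i + 1), c (i - 1)} : Finset V) ⊆ G.neighborFinset (c i) := by
    intro z hz
    rw [SimpleGraph.mem_neighborFinset]
    rw [Finset.mem_insert, Finset.mem_singleton] at hz
    rcases hz with rfl | rfl
    · exact hcadj i
    · have := hcadj (i - 1)
      rw [sub_add_cancel] at this
      exact this.symm
  have heq := Finset.eq_of_subset_of_card_le hsub (by
    rw [SimpleGraph.card_neighborFinset_eq_degree, hdegc i hi, Finset.card_pair]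
    intro h
    exact two_ne_zero_zmod hk3 (by linear_combination hcinj h))
  have hy : y ∈ G.neighborFinset (c i) := (G.mem_neighborFinset _ _).2 hE
  rw [← heq, Finset.mem_insert, Finset.mem_singleton] at hy
  rcases hy with rfl | rfl
  · exact hcyc i rfl
  · apply hcyc (i - 1)
    rw [sub_add_cancel, Sym2.eq_swap]

theorem mem_treeEdges_of_notMem_range {a b : V} (h : G.Adj a b) (ha : a ∉ Set.range c)
    (hb : b ∉ Set.range c) : s(a, b) ∈ treeEdges G c := by
  rw [mem_treeEdges]
  refine ⟨h, fun i h' => ?_, fun h' => ?_⟩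
  · rcases Sym2.eq_iff.1 h' with ⟨h1, -⟩ | ⟨h1, -⟩ <;> exact ha ⟨_, h1.symm⟩
  · rcases Sym2.mem_iff.1 h' with h1 | h1
    · exact ha ⟨0, h1⟩
    · exact hb ⟨0, h1⟩

theorem inv_mul_mem_edgeInvolutions [NeZero k] (hconn : G.Connected) (hk3 : 3 ≤ k)
    (hcinj : Function.Injective c) (hcadj : ∀ i, G.Adj (c i) (c (i + 1)))
    (hcard : Nat.card V = Nat.card G.edgeSet) {σ r : Equiv.Perm V}
    (hσ : ∀ v, σ v = v ∨ G.Adj v (σ v)) (hr : ∀ v ∉ Set.range c, r v = v)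
    (hσr : ∀ i, σ (c i) = r (c i)) : r⁻¹ * σ ∈ edgeInvolutions (treeEdges G c) := by
  have hσoff : ∀ v ∉ Set.range c, σ v ∉ Set.range c := by
    rintro v hv ⟨i, hi⟩
    obtain ⟨x, hx⟩ := r.surjective (c i)
    by_cases hxr : x ∈ Set.range c
    · obtain ⟨j, rfl⟩ := hxr
      rw [← hσr, hi] at hx
      exact hv ⟨j, σ.injective hx⟩
    · rw [hr x hxr] at hx
      exact hxr ⟨i, hx.symm⟩
  have hon : ∀ i, (r⁻¹ * σ) (c i) = c i := by
    intro i
    rw [Equiv.Perm.mul_apply, hσr, Equiv.Perm.inv_eq_iff_eq]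
  have hoff : ∀ v ∉ Set.range c, (r⁻¹ * σ) v = σ v := by
    intro v hv
    rw [Equiv.Perm.mul_apply, Equiv.Perm.inv_eq_iff_eq, hr _ (hσoff v hv)]
  rw [mem_edgeInvolutions]
  intro v
  by_cases hv : v ∈ Set.range c
  · obtain ⟨i, rfl⟩ := hv
    simp only [hon, true_or, and_self]
  · rw [hoff v hv, hoff _ (hσoff v hv)]
    refine ⟨?_, (hσ v).imp_right fun h => mem_treeEdges_of_notMem_range h hv (hσoff v hv)⟩
    by_contra hne
    obtain ⟨n, hn⟩ := exists_pow_mem_cycle_edge hconn hk3 hcinj hcadj hcard hσ hne 0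
    have hpow : ∀ m : ℕ, (σ ^ m) v ∉ Set.range c := by
      intro m
      induction m with
      | zero => exact hv
      | succ m ih =>
        rw [pow_succ', Equiv.Perm.mul_apply]
        exact hσoff _ ih
    rcases Sym2.eq_iff.1 hn with ⟨h1, -⟩ | ⟨h1, -⟩ <;> exact hpow n ⟨_, h1.symm⟩

end Unicyclic

section CharpolyExpansion

open Polynomial Equiv

variable {k : ℕ} {c : ZMod k → V}

/-- The permutation rotating the cycle and fixing all other vertices. -/
noncomputable def cycleRotation (hcinj : Function.Injective c) : Perm V :=
  Perm.viaEmbedding (Equiv.addRight (1 : ZMod k)) ⟨c, hcinj⟩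

theorem cycleRotation_apply (hcinj : Function.Injective c) (i : ZMod k) :
    cycleRotation hcinj (c i) = c (i + 1) :=
  Perm.viaEmbedding_apply (Equiv.addRight (1 : ZMod k)) ⟨c, hcinj⟩ i

theorem cycleRotation_apply_of_notMem (hcinj : Function.Injective c) {v : V}
    (hv : v ∉ Set.range c) : cycleRotation hcinj v = v :=
  Perm.viaEmbedding_apply_of_notMem (Equiv.addRight (1 : ZMod k)) ⟨c, hcinj⟩ v hv

theorem cycleRotation_inv_apply (hcinj : Function.Injective c) (i : ZMod k) :
    (cycleRotation hcinj)⁻¹ (c (i + 1)) = c i := by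
  rw [Perm.inv_eq_iff_eq, cycleRotation_apply]

theorem cycleRotation_inv_apply_of_notMem (hcinj : Function.Injective c) {v : V}
    (hv : v ∉ Set.range c) : (cycleRotation hcinj)⁻¹ v = v := by
  rw [Perm.inv_eq_iff_eq, cycleRotation_apply_of_notMem hcinj hv]

variable [Fintype V] {G : SimpleGraph V}

/-- The matrix whose determinant is the reversed characteristic polynomial of twice the
transition matrix. -/
noncomputable def revMatrix (G : SimpleGraph V) : Matrix V V ℝ[X] :=
  1 - (X : ℝ[X]) • ((2 : ℝ) • walkMatrix ℝ G).map C

theorem revMatrix_self (v : V) : revMatrix G v v = 1 := by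
  simp [revMatrix, walkMatrix]

theorem revMatrix_of_adj {a b : V} (h : G.Adj a b) :
    revMatrix G a b = -(X * C (2 / (G.degree a : ℝ))) := by
  simp [revMatrix, walkMatrix, h, h.ne, div_eq_mul_inv]

theorem eq_or_adj_of_revMatrix_ne_zero {a b : V} (h : revMatrix G a b ≠ 0) :
    a = b ∨ G.Adj b a := by
  by_contra hne
  push Not at hne
  apply h
  have : ¬G.Adj a b := fun h' => hne.2 h'.symm
  simp [revMatrix, walkMatrix, this, hne.1]

/-- The weight of an edge in the expansion of `det (revMatrix G)`. -/
noncomputable def revWeight (G : SimpleGraph V) (e : Sym2 V) : ℝ[X] :=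
  -(X ^ 2 * C (4 * edgeM G e))

theorem revWeight_eq {a b : V} (h : G.Adj a b) :
    revWeight G s(a, b) = -(revMatrix G a b * revMatrix G b a) := by
  rw [revMatrix_of_adj h, revMatrix_of_adj h.symm, revWeight]
  have : 4 * edgeM G s(a, b) = (2 / (G.degree a : ℝ)) * (2 / (G.degree b : ℝ)) := by
    simp only [edgeM, Sym2.lift_mk]
    ring
  rw [this, C_mul]
  ring

theorem eq_or_adj_of_detTerm_ne_zero {σ : Perm V} (h : detTerm (revMatrix G) σ ≠ 0) (v : V) :
    σ v = v ∨ G.Adj v (σ v) :=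
  eq_or_adj_of_revMatrix_ne_zero fun h' =>
    h (by rw [detTerm, Finset.prod_eq_zero (f := fun v => revMatrix G (σ v) v)
      (Finset.mem_univ v) h', mul_zero])

theorem apply_cycle_of_mem_edgeInvolutions [NeZero k] (hk3 : 3 ≤ k)
    (hcinj : Function.Injective c) (hcadj : ∀ i, G.Adj (c i) (c (i + 1)))
    (hdegc : ∀ i, i ≠ 0 → G.degree (c i) = 2) {τ : Perm V}
    (hτ : τ ∈ edgeInvolutions (treeEdges G c)) (i : ZMod k) : τ (c i) = c i := by
  rw [mem_edgeInvolutions] at hτ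
  refine (hτ (c i)).2.resolve_right fun h => ?_
  exact not_mem_range_of_mem_treeEdges hk3 hcinj hcadj hdegc h i (Sym2.mem_mk_left _ _)

theorem detTerm_mul [NeZero k] (hk3 : 3 ≤ k) (hcinj : Function.Injective c)
    (hcadj : ∀ i, G.Adj (c i) (c (i + 1))) (hdegc : ∀ i, i ≠ 0 → G.degree (c i) = 2)
    {r τ : Perm V} (hr : ∀ v ∉ Set.range c, r v = v) (hsign : Perm.sign r = 1)
    (hτ : τ ∈ edgeInvolutions (treeEdges G c)) :
    detTerm (revMatrix G) (r * τ) =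
      (∏ i, revMatrix G (r (c i)) (c i)) * detTerm (revMatrix G) τ := by
  have hfix := apply_cycle_of_mem_edgeInvolutions hk3 hcinj hcadj hdegc hτ
  have hprod : ∏ i, revMatrix G (r (c i)) (c i) = ∏ v, revMatrix G (r v) v := by
    refine Fintype.prod_of_injective c hcinj _ _ (fun v hv => ?_) fun i => rfl
    rw [hr v hv, revMatrix_self]
  have hsplit : ∏ v, revMatrix G ((r * τ) v) v =
      (∏ v, revMatrix G (r v) v) * ∏ v, revMatrix G (τ v) v := by
    rw [← Finset.prod_mul_distrib]
    refine Finset.prod_congr rfl fun v _ => ?_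
    by_cases hv : v ∈ Set.range c
    · obtain ⟨i, rfl⟩ := hv
      rw [Perm.mul_apply, hfix, revMatrix_self, mul_one]
    · have hτv : τ v ∉ Set.range c := by
        rintro ⟨i, hi⟩
        rw [← hfix i] at hi
        exact hv ⟨i, τ.injective hi⟩
      rw [Perm.mul_apply, hr _ hτv, hr v hv, revMatrix_self, one_mul]
  rw [detTerm, detTerm, hsplit, hprod, map_mul, hsign, one_mul]
  ring

theorem prod_cycle_weight [NeZero k] (hkodd : Odd k) (hdegu : G.degree (c 0) = 4)
    (hdegc : ∀ i, i ≠ 0 → G.degree (c i) = 2) :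
    ∏ i, (-(X * C (2 / (G.degree (c i) : ℝ))) : ℝ[X]) = -(X ^ k * C (1 / 2)) := by
  rw [← Finset.mul_prod_erase _ _ (Finset.mem_univ (0 : ZMod k)),
    Finset.prod_congr rfl (g := fun _ => (-X : ℝ[X]))]
  · rw [Finset.prod_const, Finset.card_erase_of_mem (Finset.mem_univ _), Finset.card_univ,
      ZMod.card, hdegu]
    have hk : k = k - 1 + 1 := by
      have := hkodd.pos
      omega
    have hev : Even (k - 1) := hkodd.tsub_odd odd_one
    rw [hev.neg_pow]
    have h2 : (2 / ((4 : ℕ) : ℝ)) = 1 / 2 := by norm_num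
    rw [h2]
    conv_rhs => rw [hk, pow_succ]
    ring
  · intro i hi
    rw [hdegc i (Finset.ne_of_mem_erase hi)]
    norm_num

theorem sign_cycleRotation (hkodd : Odd k) (hcinj : Function.Injective c) :
    Perm.sign (cycleRotation hcinj) = 1 := by
  have hpow : cycleRotation hcinj ^ k = 1 := by
    rw [cycleRotation, ← Perm.viaEmbeddingHom_apply, ← map_pow]
    have : (Equiv.addRight (1 : ZMod k)) ^ k = 1 := by
      ext i
      simp
    rw [this, map_one]
  have h := congrArg Perm.sign hpow
  rw [map_pow, map_one] at h
  rcases Int.units_eq_one_or (Perm.sign (cycleRotation hcinj)) with h1 | h1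
  · exact h1
  · rw [h1, hkodd.neg_one_pow] at h
    exact absurd h (by decide)

theorem det_revMatrix [NeZero k] (hconn : G.Connected) (hk3 : 3 ≤ k) (hkodd : Odd k)
    (hcinj : Function.Injective c) (hcadj : ∀ i, G.Adj (c i) (c (i + 1)))
    (hcard : Nat.card V = Nat.card G.edgeSet) (hdegu : G.degree (c 0) = 4)
    (hdegc : ∀ i, i ≠ 0 → G.degree (c i) = 2) :
    (revMatrix G).det = matchPoly (revWeight G) G.edgeFinset -
      X ^ k * matchPoly (revWeight G) (treeEdges G c) := by
  set ρ := cycleRotation hcinj with hρ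
  have hfix : ∀ {τ}, τ ∈ edgeInvolutions (treeEdges G c) → ∀ i, τ (c i) = c i :=
    fun hτ => apply_cycle_of_mem_edgeInvolutions hk3 hcinj hcadj hdegc hτ
  have hne2 : ∀ i : ZMod k, c (i + 1 + 1) ≠ c i := fun i h =>
    two_ne_zero_zmod hk3 (by linear_combination hcinj h)
  set E1 := edgeInvolutions G.edgeFinset
  set E2 := (edgeInvolutions (treeEdges G c)).image fun τ => ρ * τ
  set E3 := (edgeInvolutions (treeEdges G c)).image fun τ => ρ⁻¹ * τ
  have h2 : ∀ {σ}, σ ∈ E2 → ∀ i, σ (c i) = c (i + 1) := by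
    intro σ hσ i
    obtain ⟨τ, hτ, rfl⟩ := Finset.mem_image.1 hσ
    rw [Perm.mul_apply, hfix hτ, hρ, cycleRotation_apply]
  have h3 : ∀ {σ}, σ ∈ E3 → ∀ i, σ (c (i + 1)) = c i := by
    intro σ hσ i
    obtain ⟨τ, hτ, rfl⟩ := Finset.mem_image.1 hσ
    rw [Perm.mul_apply, hfix hτ, hρ, cycleRotation_inv_apply]
  have hd1 : Disjoint E1 (E2 ∪ E3) := by
    rw [Finset.disjoint_left]
    intro σ h h'
    have hinv := (mem_edgeInvolutions.1 h)
    rcases Finset.mem_union.1 h' with h' | h'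
    · have := (hinv (c 0)).1
      rw [h2 h', h2 h'] at this
      exact hne2 0 this
    · have := (hinv (c (0 + 1 + 1))).1
      rw [h3 h', h3 h'] at this
      exact hne2 0 this.symm
  have hd2 : Disjoint E2 E3 := by
    rw [Finset.disjoint_left]
    intro σ h h'
    have := h3 h' 0
    rw [h2 h] at this
    exact hne2 0 this
  have hcover : ∀ σ, detTerm (revMatrix G) σ ≠ 0 → σ ∈ E1 ∪ (E2 ∪ E3) := by
    intro σ h
    have hσ := eq_or_adj_of_detTerm_ne_zero h
    by_cases hinv : ∀ v, σ (σ v) = v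
    · refine Finset.mem_union_left _ (mem_edgeInvolutions.2 fun v => ⟨hinv v, ?_⟩)
      simpa using hσ v
    · push Not at hinv
      obtain ⟨v, hv⟩ := hinv
      refine Finset.mem_union_right _ ?_
      rcases apply_cycle_of_not_involutive hconn hk3 hcinj hcadj hcard hσ hv with h' | h'
      · refine Finset.mem_union_left _ (Finset.mem_image.2 ⟨ρ⁻¹ * σ, ?_, by simp⟩)
        refine inv_mul_mem_edgeInvolutions hconn hk3 hcinj hcadj hcard hσ
          (fun v hv => cycleRotation_apply_of_notMem hcinj hv) fun i => ?_
        rw [h', hρ, cycleRotation_apply]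
      · refine Finset.mem_union_right _ (Finset.mem_image.2 ⟨ρ⁻¹⁻¹ * σ, ?_, by simp⟩)
        refine inv_mul_mem_edgeInvolutions hconn hk3 hcinj hcadj hcard hσ
          (fun v hv => cycleRotation_inv_apply_of_notMem hcinj hv) fun i => ?_
        have h4 := h' (i - 1)
        have h5 := cycleRotation_inv_apply hcinj (i - 1)
        rw [sub_add_cancel] at h4 h5
        rw [h4, h5]
  have hdet : (revMatrix G).det = ∑ σ, detTerm (revMatrix G) σ := by
    rw [Matrix.det_apply']
    rfl
  have hdiag : ∀ v, revMatrix G v v = 1 := revMatrix_self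
  have hsum1 : ∑ σ ∈ E1, detTerm (revMatrix G) σ = matchPoly (revWeight G) G.edgeFinset := by
    refine sum_detTerm_edgeInvolutions hdiag (fun e he => ?_) fun a b h => ?_
    · exact G.not_isDiag_of_mem_edgeFinset he
    · exact revWeight_eq (by simpa using h)
  have hsumT : ∑ σ ∈ edgeInvolutions (treeEdges G c), detTerm (revMatrix G) σ =
      matchPoly (revWeight G) (treeEdges G c) := by
    refine sum_detTerm_edgeInvolutions hdiag (fun e he => ?_) fun a b h => ?_
    · exact G.not_isDiag_of_mem_edgeSet (mem_treeEdges.1 he).1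
    · exact revWeight_eq (mem_treeEdges.1 h).1
  have hsum2 : ∑ σ ∈ E2, detTerm (revMatrix G) σ =
      -(X ^ k * C (1 / 2)) * matchPoly (revWeight G) (treeEdges G c) := by
    rw [Finset.sum_image (fun a _ b _ h => mul_left_cancel h), ← hsumT, Finset.mul_sum]
    refine Finset.sum_congr rfl fun τ hτ => ?_
    rw [detTerm_mul hk3 hcinj hcadj hdegc
      (fun v hv => cycleRotation_apply_of_notMem hcinj hv) (sign_cycleRotation hkodd hcinj) hτ,
      ← prod_cycle_weight hkodd hdegu hdegc]
    congr 1
    rw [← Equiv.prod_comp (Equiv.addRight (1 : ZMod k))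
      (fun i => (-(X * C (2 / (G.degree (c i) : ℝ))) : ℝ[X]))]
    refine Finset.prod_congr rfl fun i _ => ?_
    rw [cycleRotation_apply, revMatrix_of_adj (hcadj i).symm]
    rfl
  have hsum3 : ∑ σ ∈ E3, detTerm (revMatrix G) σ =
      -(X ^ k * C (1 / 2)) * matchPoly (revWeight G) (treeEdges G c) := by
    rw [Finset.sum_image (fun a _ b _ h => mul_left_cancel h), ← hsumT, Finset.mul_sum]
    refine Finset.sum_congr rfl fun τ hτ => ?_
    rw [detTerm_mul hk3 hcinj hcadj hdegc
      (fun v hv => cycleRotation_inv_apply_of_notMem hcinj hv)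
      (by rw [Perm.sign_inv, sign_cycleRotation hkodd hcinj]) hτ,
      ← prod_cycle_weight hkodd hdegu hdegc]
    congr 1
    rw [← Equiv.prod_comp (Equiv.addRight (1 : ZMod k))]
    refine Finset.prod_congr rfl fun i _ => ?_
    rw [Equiv.coe_addRight, cycleRotation_inv_apply, revMatrix_of_adj (hcadj i)]
  rw [hdet, ← Finset.sum_subset (Finset.subset_univ (E1 ∪ (E2 ∪ E3)))
    (fun σ _ h => by_contra fun h' => h (hcover σ h')), Finset.sum_union hd1,
    Finset.sum_union hd2, hsum1, hsum2, hsum3]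
  have hC : (C (1 / 2) : ℝ[X]) + C (1 / 2) = 1 := by
    rw [← C_add]
    norm_num
  linear_combination (-(X ^ k * matchPoly (revWeight G) (treeEdges G c))) * hC

end CharpolyExpansion

section IntegerCoefficients

open Polynomial

/-- The subring of real polynomials with integer coefficients. -/
noncomputable def intPoly : Subring ℝ[X] := (mapRingHom (Int.castRingHom ℝ)).range

theorem mem_intPoly {p : ℝ[X]} : p ∈ intPoly ↔ ∀ n, ∃ m : ℤ, p.coeff n = m := by
  rw [intPoly, RingHom.mem_range]
  change (∃ x, map (Int.castRingHom ℝ) x = p) ↔ _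
  rw [← mem_lifts, lifts_iff_coeff_lifts]
  simp [eq_comm]

theorem X_mem_intPoly : (X : ℝ[X]) ∈ intPoly := ⟨X, by simp⟩

theorem mem_intPoly_of_X_mul {p : ℝ[X]} (h : X * p ∈ intPoly) : p ∈ intPoly := by
  rw [mem_intPoly] at h ⊢
  intro n
  have := h (n + 1)
  rwa [coeff_X_mul] at this

theorem mem_intPoly_of_mul {p q : ℝ[X]} (hp : p ∈ intPoly) (hp0 : p.coeff 0 = 1)
    (h : p * q ∈ intPoly) : q ∈ intPoly := by
  rw [mem_intPoly] at hp h ⊢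
  intro n
  induction n using Nat.strong_induction_on with
  | _ n ih =>
    obtain ⟨a, ha⟩ := h n
    rw [coeff_mul, Finset.Nat.sum_antidiagonal_eq_sum_range_succ_mk, Finset.sum_range_succ',
      hp0, one_mul, Nat.sub_zero] at ha
    have hsum : ∑ i ∈ Finset.range n, p.coeff (i + 1) * q.coeff (n - (i + 1)) ∈
        (Int.castRingHom ℝ).range := by
      refine Subring.sum_mem _ fun i hi => Subring.mul_mem _ ?_ ?_
      · obtain ⟨b, hb⟩ := hp (i + 1)
        exact ⟨b, by simp [hb]⟩
      · have := Finset.mem_range.1 hi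
        obtain ⟨b, hb⟩ := ih (n - (i + 1)) (by omega)
        exact ⟨b, by simp [hb]⟩
    obtain ⟨b, hb⟩ := hsum
    refine ⟨a - b, ?_⟩
    rw [eq_intCast] at hb
    rw [Int.cast_sub, hb, ← ha]
    exact (add_sub_cancel_left _ _).symm

theorem matchPoly_mem_intPoly {wt : Sym2 V → ℝ[X]} {A : Finset (Sym2 V)}
    (h : ∀ e ∈ A, wt e ∈ intPoly) : matchPoly wt A ∈ intPoly := by
  refine Subring.sum_mem _ fun S hS => Subring.prod_mem _ fun e he => h e ?_
  exact Finset.mem_powerset.1 (Finset.mem_filter.1 hS).1 he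

variable [Fintype V] {G : SimpleGraph V} {k : ℕ} {c : ZMod k → V}

/-- The generating polynomial of the sums `4 ^ i * matchSum G A i`. -/
noncomputable def matchGen (G : SimpleGraph V) (A : Finset (Sym2 V)) : ℝ[X] :=
  matchPoly (fun e => X * C (4 * edgeM G e)) A

theorem coeff_matchGen (A : Finset (Sym2 V)) (n : ℕ) :
    (matchGen G A).coeff n = 4 ^ n * matchSum G A n := by
  have hterm : ∀ S : Finset (Sym2 V), (∏ e ∈ S, (X * C (4 * edgeM G e) : ℝ[X])).coeff n =
      if S.card = n then 4 ^ n * ∏ e ∈ S, edgeM G e else 0 := by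
    intro S
    rw [Finset.prod_mul_distrib, Finset.prod_const, ← map_prod, mul_comm, coeff_C_mul_X_pow,
      Finset.prod_mul_distrib, Finset.prod_const]
    by_cases h : S.card = n
    · simp [h]
    · rw [if_neg h, if_neg (Ne.symm h)]
  rw [matchGen, matchPoly, finsetSum_coeff, Finset.sum_congr rfl fun S _ => hterm S,
    ← Finset.sum_filter, matchSum, Finset.mul_sum, Finset.filter_filter]
  refine Finset.sum_congr (Finset.filter_congr fun S _ => ?_) fun _ _ => rfl
  exact and_comm

theorem matchSum_zero (A : Finset (Sym2 V)) : matchSum G A 0 = 1 := by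
  rw [matchSum, Finset.sum_eq_single ∅]
  · simp
  · intro S hS hne
    exact absurd (Finset.card_eq_zero.1 (Finset.mem_filter.1 hS).2.1) hne
  · intro h
    exact absurd (by simp) h

theorem matchPoly_revWeight (A : Finset (Sym2 V)) :
    matchPoly (revWeight G) A = expand ℝ 2 ((matchGen G A).comp (-X)) := by
  rw [matchGen, ← coe_compRingHom_apply, matchPoly_map, ← AlgHom.coe_toRingHom, matchPoly_map]
  refine matchPoly_congr fun e _ => ?_
  simp [revWeight]

theorem coeff_matchPoly_revWeight (A : Finset (Sym2 V)) (n : ℕ) :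
    (matchPoly (revWeight G) A).coeff (2 * n) = (-1) ^ n * (matchGen G A).coeff n := by
  rw [matchPoly_revWeight, coeff_expand_mul' two_pos, ← neg_one_mul, ← C_1, ← C_neg,
    comp_C_mul_X_coeff, mul_comm]

theorem coeff_matchPoly_revWeight_of_odd (A : Finset (Sym2 V)) {n : ℕ} (hn : Odd n) :
    (matchPoly (revWeight G) A).coeff n = 0 := by
  rw [matchPoly_revWeight, coeff_expand two_pos, if_neg]
  exact hn.not_two_dvd_nat

theorem exists_int_of_neg_one_pow_mul {x : ℝ} {n : ℕ} (h : ∃ m : ℤ, (-1) ^ n * x = m) :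
    ∃ m : ℤ, x = m := by
  obtain ⟨m, hm⟩ := h
  rcases neg_one_pow_eq_or ℝ n with h1 | h1
  · exact ⟨m, by rw [← hm, h1, one_mul]⟩
  · exact ⟨-m, by rw [Int.cast_neg, ← hm, h1]; ring⟩

theorem matchGen_mem_intPoly [NeZero k] (hconn : G.Connected) (hk3 : 3 ≤ k) (hkodd : Odd k)
    (hcinj : Function.Injective c) (hcadj : ∀ i, G.Adj (c i) (c (i + 1)))
    (hcard : Nat.card V = Nat.card G.edgeSet) (hdegu : G.degree (c 0) = 4)
    (hdegc : ∀ i, i ≠ 0 → G.degree (c i) = 2) (hper : IsPeriodic G) :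
    matchGen G G.edgeFinset ∈ intPoly ∧ matchGen G (treeEdges G c) ∈ intPoly := by
  have : Nontrivial V := ⟨c 0, c (0 + 1), (hcadj 0).ne⟩
  have hpos : ∀ x, 0 < G.degree x := fun x => hconn.preconnected.degree_pos_of_nontrivial x
  have hint : ∀ n, ∃ m : ℤ, (revMatrix G).det.coeff n = m := charpolyRev_walkMatrix_int G hpos hper
  rw [det_revMatrix hconn hk3 hkodd hcinj hcadj hcard hdegu hdegc] at hint
  refine ⟨mem_intPoly.2 fun n => ?_, mem_intPoly.2 fun n => ?_⟩
  · refine exists_int_of_neg_one_pow_mul (n := n) ?_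
    obtain ⟨m, hm⟩ := hint (2 * n)
    refine ⟨m, ?_⟩
    rw [← hm, coeff_sub, coeff_matchPoly_revWeight, coeff_X_pow_mul']
    split_ifs with h
    · rw [coeff_matchPoly_revWeight_of_odd, sub_zero]
      exact Nat.Even.sub_odd h (even_two_mul n) hkodd
    · rw [sub_zero]
  · refine exists_int_of_neg_one_pow_mul (n := n) ?_
    obtain ⟨m, hm⟩ := hint (2 * n + k)
    refine ⟨-m, ?_⟩
    rw [Int.cast_neg, ← hm, coeff_sub,
      coeff_matchPoly_revWeight_of_odd _ ((even_two_mul n).add_odd hkodd), coeff_X_pow_mul,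
      coeff_matchPoly_revWeight]
    ring

end IntegerCoefficients

section Threads

open Polynomial

/-- A nonbacktracking walk `v` leaving the cycle at `c 0`, whose first `t` vertices after `c 0`
have degree two. -/
structure IsThread [Fintype V] {k : ℕ} (G : SimpleGraph V) (c : ZMod k → V) (v : ℕ → V)
    (t : ℕ) : Prop where
  start : v 0 = c 0
  adj : ∀ s < t, G.Adj (v s) (v (s + 1))
  one_notMem : v 1 ∉ Set.range c
  nonbacktracking : ∀ s, s + 2 ≤ t → v (s + 2) ≠ v s
  degree : ∀ s, 1 ≤ s → s ≤ t → G.degree (v s) = 2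

theorem eq_of_degree_eq_two [Fintype V] {G : SimpleGraph V} {a b x y : V}
    (hdeg : G.degree a = 2) (hx : G.Adj a x) (hy : G.Adj a y) (hxy : x ≠ y) (hb : G.Adj a b) :
    b = x ∨ b = y := by
  have hsub : ({x, y} : Finset V) ⊆ G.neighborFinset a := by
    intro z hz
    rw [SimpleGraph.mem_neighborFinset]
    rw [Finset.mem_insert, Finset.mem_singleton] at hz
    rcases hz with rfl | rfl <;> assumption
  have heq := Finset.eq_of_subset_of_card_le hsub (by
    rw [SimpleGraph.card_neighborFinset_eq_degree, hdeg, Finset.card_pair hxy])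
  have hb' : b ∈ G.neighborFinset a := (G.mem_neighborFinset _ _).2 hb
  rwa [← heq, Finset.mem_insert, Finset.mem_singleton] at hb'

variable [Fintype V] {G : SimpleGraph V} {k : ℕ} {c : ZMod k → V} {v : ℕ → V} {t : ℕ}

theorem IsThread.notMem_range [NeZero k] (h : IsThread G c v t) (hconn : G.Connected)
    (hk3 : 3 ≤ k) (hcinj : Function.Injective c) (hcadj : ∀ i, G.Adj (c i) (c (i + 1)))
    (hcard : Nat.card V = Nat.card G.edgeSet) (hdegc : ∀ i, i ≠ 0 → G.degree (c i) = 2)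
    {s : ℕ} (hs1 : 1 ≤ s) (hst : s ≤ t) : v s ∉ Set.range c := by
  induction s using Nat.strong_induction_on with
  | _ s ih =>
    obtain rfl | hs := hs1.eq_or_lt
    · exact h.one_notMem
    obtain ⟨s, rfl⟩ : ∃ n, s = n + 1 := ⟨s - 1, by omega⟩
    have hprev : v s ∉ Set.range c := ih s (by omega) (by omega) (by omega)
    rintro ⟨i, hi⟩
    have hadj : G.Adj (v s) (c i) := hi ▸ h.adj s (by omega)
    by_cases hi0 : i = 0
    · rw [hi0, ← h.start] at hi
      refine ne_of_isAcyclic_of_nonbacktracking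
        (isAcyclic_deleteEdges_cycle hconn hk3 hcinj hcadj hcard 0) (by omega) v
        (fun j hj => ?_) (fun j hj => h.nonbacktracking j (by omega)) hi
      rw [SimpleGraph.deleteEdges_adj]
      refine ⟨h.adj j (by omega), fun hmem => ?_⟩
      rw [Set.mem_singleton_iff, Sym2.eq_iff] at hmem
      rcases Nat.lt_or_ge j s with hjs | hjs
      · refine ih (j + 1) (by omega) (by omega) (by omega) ?_
        rcases hmem with hmem | hmem <;> exact ⟨_, hmem.2.symm⟩
      · obtain rfl : j = s := by omega
        rcases hmem with hmem | hmem <;> exact hprev ⟨_, hmem.1.symm⟩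
    · refine not_mem_range_of_mem_treeEdges hk3 hcinj hcadj hdegc
        (e := s(v s, c i)) (mem_treeEdges.2 ⟨hadj, fun j hj => ?_, fun hmem => ?_⟩) i
        (Sym2.mem_mk_right _ _)
      · rcases Sym2.eq_iff.1 hj with hj | hj <;> exact hprev ⟨_, hj.1.symm⟩
      · rcases Sym2.mem_iff.1 hmem with hmem | hmem
        · exact hprev ⟨_, hmem⟩
        · exact hi0 (hcinj hmem.symm)

theorem IsThread.ne [NeZero k] (h : IsThread G c v t) (hconn : G.Connected)
    (hk3 : 3 ≤ k) (hcinj : Function.Injective c) (hcadj : ∀ i, G.Adj (c i) (c (i + 1)))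
    (hcard : Nat.card V = Nat.card G.edgeSet) (hdegc : ∀ i, i ≠ 0 → G.degree (c i) = 2)
    {a b : ℕ} (hab : a < b) (hbt : b ≤ t) : v a ≠ v b := by
  have hne := ne_of_isAcyclic_of_nonbacktracking
    (isAcyclic_deleteEdges_cycle hconn hk3 hcinj hcadj hcard 0) (n := b - a) (by omega)
    (fun j => v (a + j)) (fun j hj => ?_) fun j hj => h.nonbacktracking (a + j) (by omega)
  · simpa [Nat.add_sub_cancel' hab.le] using hne
  · rw [SimpleGraph.deleteEdges_adj]
    refine ⟨h.adj (a + j) (by omega), fun hmem => ?_⟩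
    refine h.notMem_range hconn hk3 hcinj hcadj hcard hdegc (s := a + j + 1) (by omega)
      (by omega) ?_
    rw [Set.mem_singleton_iff, Sym2.eq_iff] at hmem
    rcases hmem with hmem | hmem <;> exact ⟨_, hmem.2.symm⟩

theorem IsThread.injOn [NeZero k] (h : IsThread G c v t) (hconn : G.Connected)
    (hk3 : 3 ≤ k) (hcinj : Function.Injective c) (hcadj : ∀ i, G.Adj (c i) (c (i + 1)))
    (hcard : Nat.card V = Nat.card G.edgeSet) (hdegc : ∀ i, i ≠ 0 → G.degree (c i) = 2)
    {a b : ℕ} (ha : a ≤ t) (hb : b ≤ t) (hab : v a = v b) : a = b := by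
  rcases lt_trichotomy a b with hlt | heq | hlt
  · exact absurd hab (h.ne hconn hk3 hcinj hcadj hcard hdegc hlt hb)
  · exact heq
  · exact absurd hab.symm (h.ne hconn hk3 hcinj hcadj hcard hdegc hlt ha)

theorem IsThread.eq_of_mem (h : IsThread G c v t) {s : ℕ} (hst : s + 2 ≤ t) {e : Sym2 V}
    (he : e ∈ G.edgeSet) (hmem : v (s + 1) ∈ e) :
    e = s(v s, v (s + 1)) ∨ e = s(v (s + 1), v (s + 2)) := by
  obtain ⟨y, rfl⟩ := Sym2.mem_iff_exists.1 hmem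
  rcases eq_of_degree_eq_two (h.degree (s + 1) (by omega) (by omega))
    (h.adj s (by omega)).symm (h.adj (s + 1) (by omega)) (h.nonbacktracking s hst).symm he
    with rfl | rfl
  · exact Or.inl Sym2.eq_swap
  · exact Or.inr rfl

/-- The edges of the tree part not among the second to `r`-th edges of the thread. -/
noncomputable def prunedEdges (G : SimpleGraph V) (c : ZMod k → V) (v : ℕ → V) (r : ℕ) :
    Finset (Sym2 V) :=
  treeEdges G c \ (Finset.Icc 2 r).image fun j => s(v (j - 1), v j)

theorem prunedEdges_one : prunedEdges G c v 1 = treeEdges G c := by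
  simp [prunedEdges]

theorem mem_prunedEdges {r : ℕ} {e : Sym2 V} : e ∈ prunedEdges G c v r ↔
    e ∈ treeEdges G c ∧ ∀ j, j + 2 ≤ r → e ≠ s(v (j + 1), v (j + 2)) := by
  rw [prunedEdges, Finset.mem_sdiff, Finset.mem_image]
  refine and_congr_right fun _ => ⟨fun h j hj he => h ⟨j + 2, ?_, he.symm⟩, ?_⟩
  · exact Finset.mem_Icc.2 ⟨by omega, hj⟩
  · rintro h ⟨j, hj, rfl⟩
    rw [Finset.mem_Icc] at hj
    obtain ⟨i, rfl⟩ := Nat.exists_eq_add_of_le' hj.1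
    exact h i hj.2 rfl

theorem IsThread.edge_mem_treeEdges [NeZero k] (h : IsThread G c v t) (hconn : G.Connected)
    (hk3 : 3 ≤ k) (hcinj : Function.Injective c) (hcadj : ∀ i, G.Adj (c i) (c (i + 1)))
    (hcard : Nat.card V = Nat.card G.edgeSet) (hdegc : ∀ i, i ≠ 0 → G.degree (c i) = 2)
    {s : ℕ} (hst : s + 2 ≤ t) : s(v (s + 1), v (s + 2)) ∈ treeEdges G c :=
  mem_treeEdges_of_notMem_range (h.adj (s + 1) (by omega))
    (h.notMem_range hconn hk3 hcinj hcadj hcard hdegc (by omega) (by omega))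
    (h.notMem_range hconn hk3 hcinj hcadj hcard hdegc (by omega) (by omega))

theorem IsThread.edge_injOn [NeZero k] (h : IsThread G c v t) (hconn : G.Connected)
    (hk3 : 3 ≤ k) (hcinj : Function.Injective c) (hcadj : ∀ i, G.Adj (c i) (c (i + 1)))
    (hcard : Nat.card V = Nat.card G.edgeSet) (hdegc : ∀ i, i ≠ 0 → G.degree (c i) = 2)
    {a b : ℕ} (ha : a < t) (hb : b < t) (hab : s(v a, v (a + 1)) = s(v b, v (b + 1))) :
    a = b := by
  have hinj : ∀ {a b}, a ≤ t → b ≤ t → v a = v b → a = b :=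
    h.injOn hconn hk3 hcinj hcadj hcard hdegc
  rcases Sym2.eq_iff.1 hab with ⟨h1, -⟩ | ⟨h1, h2⟩
  · exact hinj (by omega) (by omega) h1
  · have := hinj (by omega) (by omega) h1
    have := hinj (by omega) (by omega) h2
    omega

theorem IsThread.offEdge_treeEdges (h : IsThread G c v t) (ht : 2 ≤ t) :
    offEdge (treeEdges G c) s(c 0, v 1) = prunedEdges G c v 2 := by
  refine offEdge_eq_of_forall fun f => ?_
  rw [mem_prunedEdges]
  refine and_congr_right fun hf => ?_
  rw [mem_treeEdges] at hf
  constructor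
  · intro hne x hx hxf
    rcases Sym2.mem_iff.1 hx with rfl | rfl
    · exact hf.2.2 hxf
    · rcases h.eq_of_mem (s := 0) ht hf.1 hxf with rfl | rfl
      · rw [h.start] at hf
        exact hf.2.2 (Sym2.mem_mk_left _ _)
      · exact hne 0 (by omega) rfl
  · rintro hoff j hj rfl
    obtain rfl : j = 0 := by omega
    exact hoff (v 1) (Sym2.mem_mk_right _ _) (Sym2.mem_mk_left _ _)

theorem IsThread.offEdge_prunedEdges (h : IsThread G c v t) {r : ℕ} (hr : r + 3 ≤ t) :
    offEdge (prunedEdges G c v (r + 2)) s(v (r + 1), v (r + 2)) = prunedEdges G c v (r + 3) := by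
  refine offEdge_eq_of_forall fun f => ?_
  rw [mem_prunedEdges, mem_prunedEdges, and_assoc]
  refine and_congr_right fun hf => ?_
  rw [mem_treeEdges] at hf
  constructor
  · intro hne
    refine ⟨fun j hj => hne j (by omega), fun x hx hxf => ?_⟩
    rcases Sym2.mem_iff.1 hx with rfl | rfl
    · rcases h.eq_of_mem (by omega) hf.1 hxf with rfl | rfl
      · rcases Nat.eq_zero_or_pos r with rfl | hr0
        · rw [h.start] at hf
          exact hf.2.2 (Sym2.mem_mk_left _ _)
        · obtain ⟨r, rfl⟩ := Nat.exists_eq_add_of_le' hr0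
          exact hne r (by omega) rfl
      · exact hne r (by omega) rfl
    · rcases h.eq_of_mem (by omega) hf.1 hxf with rfl | rfl
      · exact hne r (by omega) rfl
      · exact hne (r + 1) (by omega) rfl
  · rintro ⟨hne, hoff⟩ j hj
    rcases Nat.lt_or_ge (j + 2) (r + 3) with hlt | hge
    · exact hne j (by omega)
    · obtain rfl : j = r + 1 := by omega
      rintro rfl
      exact hoff (v (r + 2)) (Sym2.mem_mk_right _ _) (Sym2.mem_mk_left _ _)

theorem IsThread.insert_prunedEdges [NeZero k] (h : IsThread G c v t) (hconn : G.Connected)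
    (hk3 : 3 ≤ k) (hcinj : Function.Injective c) (hcadj : ∀ i, G.Adj (c i) (c (i + 1)))
    (hcard : Nat.card V = Nat.card G.edgeSet) (hdegc : ∀ i, i ≠ 0 → G.degree (c i) = 2)
    {r : ℕ} (hr : r + 2 ≤ t) :
    prunedEdges G c v (r + 1) = insert s(v (r + 1), v (r + 2)) (prunedEdges G c v (r + 2)) := by
  ext f
  rw [Finset.mem_insert, mem_prunedEdges, mem_prunedEdges]
  constructor
  · rintro ⟨hf, hne⟩
    refine or_iff_not_imp_left.2 fun hfr => ⟨hf, fun j hj => ?_⟩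
    rcases Nat.lt_or_ge j r with hlt | hge
    · exact hne j (by omega)
    · obtain rfl : j = r := by omega
      exact hfr
  · rintro (rfl | ⟨hf, hne⟩)
    · refine ⟨h.edge_mem_treeEdges hconn hk3 hcinj hcadj hcard hdegc hr, fun j hj heq => ?_⟩
      have := h.edge_injOn hconn hk3 hcinj hcadj hcard hdegc (a := r + 1) (b := j + 1)
        (by omega) (by omega) heq
      omega
    · exact ⟨hf, fun j hj => hne j (by omega)⟩

theorem edgeWeight_eq_X {a b : V} (ha : G.degree a = 2) (hb : G.degree b = 2) :
    (X * C (4 * edgeM G s(a, b)) : ℝ[X]) = X := by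
  have : 4 * edgeM G s(a, b) = 1 := by
    simp only [edgeM, Sym2.lift_mk, ha, hb]
    norm_num
  rw [this, C_1, mul_one]

theorem IsThread.matchGen_prunedEdges [NeZero k] (h : IsThread G c v t) (hconn : G.Connected)
    (hk3 : 3 ≤ k) (hcinj : Function.Injective c) (hcadj : ∀ i, G.Adj (c i) (c (i + 1)))
    (hcard : Nat.card V = Nat.card G.edgeSet) (hdegc : ∀ i, i ≠ 0 → G.degree (c i) = 2)
    {r : ℕ} (hr : r + 3 ≤ t) :
    matchGen G (prunedEdges G c v (r + 1)) =
      matchGen G (prunedEdges G c v (r + 2)) + X * matchGen G (prunedEdges G c v (r + 3)) := by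
  rw [h.insert_prunedEdges hconn hk3 hcinj hcadj hcard hdegc (by omega), matchGen,
    matchPoly_insert, h.offEdge_prunedEdges hr,
    edgeWeight_eq_X (h.degree _ (by omega) (by omega)) (h.degree _ (by omega) (by omega))]
  · rfl
  · exact fun hmem => (mem_prunedEdges.1 hmem).2 r le_rfl rfl

/-- Half the sum of the generating polynomials of the tree part pruned along two threads. -/
noncomputable def prunedGen (G : SimpleGraph V) (c : ZMod k → V) (v w : ℕ → V) (r : ℕ) : ℝ[X] :=
  C (1 / 2) * (matchGen G (prunedEdges G c v r) + matchGen G (prunedEdges G c w r))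

theorem coeff_prunedGen (v w : ℕ → V) (n r : ℕ) :
    (prunedGen G c v w r).coeff n = 1 / 2 * (4 ^ n * Lm G c v w n r) := by
  rw [prunedGen, coeff_C_mul, coeff_add, coeff_matchGen, coeff_matchGen, Lm]
  change _ = 1 / 2 * (4 ^ n *
    (matchSum G (prunedEdges G c v r) n + matchSum G (prunedEdges G c w r) n))
  ring

theorem prunedGen_mem_intPoly [NeZero k] {w : ℕ → V} (hv : IsThread G c v t)
    (hw : IsThread G c w t) (hconn : G.Connected)
    (hk3 : 3 ≤ k) (hcinj : Function.Injective c) (hcadj : ∀ i, G.Adj (c i) (c (i + 1)))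
    (hcard : Nat.card V = Nat.card G.edgeSet) (hdegc : ∀ i, i ≠ 0 → G.degree (c i) = 2)
    (hT : matchGen G (treeEdges G c) ∈ intPoly) (h2 : 2 ≤ t → prunedGen G c v w 2 ∈ intPoly)
    {r : ℕ} (hr : r + 2 ≤ t) : prunedGen G c v w (r + 2) ∈ intPoly := by
  suffices h : prunedGen G c v w (r + 1) ∈ intPoly ∧ prunedGen G c v w (r + 2) ∈ intPoly from h.2
  induction r with
  | zero =>
    refine ⟨?_, h2 hr⟩
    have : prunedGen G c v w 1 = matchGen G (treeEdges G c) := by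
      rw [prunedGen, prunedEdges_one, prunedEdges_one, ← two_mul, ← mul_assoc, ← C_ofNat, ← C_mul]
      norm_num
    exact this ▸ hT
  | succ r ih =>
    obtain ⟨h0, h1⟩ := ih (by omega)
    refine ⟨h1, mem_intPoly_of_X_mul ?_⟩
    have : X * prunedGen G c v w (r + 3) =
        prunedGen G c v w (r + 1) - prunedGen G c v w (r + 2) := by
      rw [prunedGen, prunedGen, prunedGen,
        hv.matchGen_prunedEdges hconn hk3 hcinj hcadj hcard hdegc (r := r) (by omega),
        hw.matchGen_prunedEdges hconn hk3 hcinj hcadj hcard hdegc (r := r) (by omega)]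
      ring
    exact this ▸ Subring.sub_mem _ h0 h1

end Threads

section CycleEdges

open Polynomial

variable {k : ℕ} {c : ZMod k → V}

/-- The permutation reflecting the cycle and fixing all other vertices. -/
noncomputable def cycleReflection (hcinj : Function.Injective c) : Equiv.Perm V :=
  Equiv.Perm.viaEmbedding (Equiv.neg (ZMod k)) ⟨c, hcinj⟩

theorem cycleReflection_apply (hcinj : Function.Injective c) (i : ZMod k) :
    cycleReflection hcinj (c i) = c (-i) :=
  Equiv.Perm.viaEmbedding_apply (Equiv.neg (ZMod k)) ⟨c, hcinj⟩ i

theorem nodup_and_adj_iff_mem [Fintype V] {G : SimpleGraph V} (hk3 : 3 ≤ k)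
    (hcinj : Function.Injective c)
    (hcadj : ∀ i, G.Adj (c i) (c (i + 1))) (hdegu : G.degree (c 0) = 4) {x y : V}
    (hx : x ∉ Set.range c) (hy : y ∉ Set.range c) (hxy : x ≠ y) (hux : G.Adj (c 0) x)
    (huy : G.Adj (c 0) y) :
    [c 1, c (-1), x, y].Nodup ∧ ∀ z, G.Adj (c 0) z ↔ z ∈ [c 1, c (-1), x, y] := by
  have hne : c 1 ≠ c (-1) := fun h =>
    two_ne_zero_zmod hk3 (by linear_combination hcinj h)
  have hcx : ∀ i, c i ≠ x := fun i h => hx ⟨i, h⟩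
  have hcy : ∀ i, c i ≠ y := fun i h => hy ⟨i, h⟩
  have hnodup : [c 1, c (-1), x, y].Nodup := by simp [hne, hcx, hcy, hxy]
  refine ⟨hnodup, fun z => ?_⟩
  have h1 : G.Adj (c 0) (c 1) := by simpa using hcadj 0
  have h2 : G.Adj (c 0) (c (-1)) := by simpa using (hcadj (-1)).symm
  have hsub : [c 1, c (-1), x, y].toFinset ⊆ G.neighborFinset (c 0) := by
    intro w hw
    rw [SimpleGraph.mem_neighborFinset]
    simp only [List.mem_toFinset, List.mem_cons, List.not_mem_nil, or_false] at hw
    rcases hw with rfl | rfl | rfl | rfl <;> assumption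
  have heq := Finset.eq_of_subset_of_card_le hsub (by
    rw [SimpleGraph.card_neighborFinset_eq_degree, hdegu, List.toFinset_card_of_nodup hnodup]
    rfl)
  rw [← SimpleGraph.mem_neighborFinset, ← heq, List.mem_toFinset]

variable [NeZero k]

/-- The edges of the cycle that do not contain the vertex `c 0`. -/
noncomputable def innerEdges (c : ZMod k → V) : Finset (Sym2 V) :=
  (Finset.univ.filter fun i : ZMod k => i ≠ 0 ∧ i + 1 ≠ 0).image fun i => s(c i, c (i + 1))

theorem mem_innerEdges {e : Sym2 V} :
    e ∈ innerEdges c ↔ ∃ i, (i ≠ 0 ∧ i + 1 ≠ 0) ∧ s(c i, c (i + 1)) = e := by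
  simp [innerEdges]

theorem exists_eq_of_mem_innerEdges {e : Sym2 V} (he : e ∈ innerEdges c) {x : V} (hx : x ∈ e) :
    ∃ i, i ≠ 0 ∧ x = c i := by
  obtain ⟨i, hi, rfl⟩ := mem_innerEdges.1 he
  rcases Sym2.mem_iff.1 hx with rfl | rfl
  · exact ⟨i, hi.1, rfl⟩
  · exact ⟨i + 1, hi.2, rfl⟩

theorem image_innerEdges (hcinj : Function.Injective c) :
    (innerEdges c).image (Sym2.map (cycleReflection hcinj)) = innerEdges c := by
  refine Finset.eq_of_subset_of_card_le (fun e he => ?_) ?_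
  · obtain ⟨f, hf, rfl⟩ := Finset.mem_image.1 he
    obtain ⟨i, ⟨h0, h1⟩, rfl⟩ := mem_innerEdges.1 hf
    rw [mem_innerEdges]
    refine ⟨-(i + 1), ⟨neg_ne_zero.2 h1, ?_⟩, ?_⟩
    · have : -(i + 1) + 1 = -i := by ring
      rwa [this, neg_ne_zero]
    · have : -(i + 1) + 1 = -i := by ring
      rw [Sym2.map_mk, cycleReflection_apply, cycleReflection_apply, this, Sym2.eq_swap]
  · rw [Finset.card_image_of_injective _ (Sym2.map.injective (Equiv.injective _))]

theorem offEdge_image (r : Equiv.Perm V) (A : Finset (Sym2 V)) (e : Sym2 V) :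
    offEdge (A.image (Sym2.map r)) (Sym2.map r e) = (offEdge A e).image (Sym2.map r) := by
  rw [offEdge, offEdge, Finset.filter_image]
  congr 1
  refine Finset.filter_congr fun f _ => ?_
  simp only [Sym2.mem_map]
  constructor
  · intro h x hx
    exact h (r x) ⟨⟨x, hx.1, rfl⟩, ⟨x, hx.2, rfl⟩⟩
  · rintro h x ⟨⟨y, hy, rfl⟩, ⟨z, hz, hzy⟩⟩
    rw [r.injective hzy] at hz
    exact h y ⟨hy, hz⟩

theorem matchPoly_offEdge_innerEdges (hcinj : Function.Injective c) {R : Type*} [CommRing R]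
    (y : R) : matchPoly (fun _ => y) (offEdge (innerEdges c) s(c 0, c (-1))) =
      matchPoly (fun _ => y) (offEdge (innerEdges c) s(c 0, c 1)) := by
  have h : Sym2.map (cycleReflection hcinj) s(c 0, c 1) = s(c 0, c (-1)) := by
    rw [Sym2.map_mk, cycleReflection_apply, cycleReflection_apply, neg_zero]
  rw [← h]
  nth_rewrite 1 [← image_innerEdges hcinj]
  rw [offEdge_image, matchPoly_image]

theorem matchPoly_insert_star {R : Type*} [CommRing R] (wt : Sym2 V → R) {u : V}
    {B : Finset (Sym2 V)} (hB : ∀ e ∈ B, u ∉ e) {l : List V} (hl : l.Nodup) :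
    matchPoly wt ((l.map fun y => s(u, y)).toFinset ∪ B) =
      matchPoly wt B + (l.map fun y => wt s(u, y) * matchPoly wt (offEdge B s(u, y))).sum := by
  induction l with
  | nil => simp
  | cons y l ih =>
    rw [List.nodup_cons] at hl
    have hoff : ∀ l : List V, offEdge ((l.map fun y => s(u, y)).toFinset ∪ B) s(u, y) =
        offEdge B s(u, y) := by
      intro l
      induction l with
      | nil => simp
      | cons z l ih =>
        rw [List.map_cons, List.toFinset_cons, Finset.insert_union,
          offEdge_insert_of_mem (Sym2.mem_mk_left u y) (Sym2.mem_mk_left u z), ih]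
    rw [List.map_cons, List.toFinset_cons, Finset.insert_union, matchPoly_insert, hoff, ih hl.2,
      List.map_cons, List.sum_cons]
    · ring
    · intro hmem
      rcases Finset.mem_union.1 hmem with hmem | hmem
      · rw [List.mem_toFinset, List.mem_map] at hmem
        obtain ⟨z, hz, hzy⟩ := hmem
        rw [Sym2.congr_right] at hzy
        exact hl.1 (hzy ▸ hz)
      · exact hB _ hmem (Sym2.mem_mk_left _ _)

variable [Fintype V] {G : SimpleGraph V}

theorem edgeFinset_eq_union (hcadj : ∀ i, G.Adj (c i) (c (i + 1))) {l : List V}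
    (hl : ∀ z, G.Adj (c 0) z ↔ z ∈ l) :
    G.edgeFinset = (l.map fun y => s(c 0, y)).toFinset ∪ (innerEdges c ∪ treeEdges G c) := by
  ext e
  rw [SimpleGraph.mem_edgeFinset, Finset.mem_union, Finset.mem_union, mem_treeEdges,
    List.mem_toFinset, List.mem_map]
  constructor
  · intro he
    by_cases h0 : c 0 ∈ e
    · obtain ⟨z, rfl⟩ := Sym2.mem_iff_exists.1 h0
      exact Or.inl ⟨z, (hl z).1 he, rfl⟩
    · refine Or.inr (or_iff_not_imp_right.2 fun h => ?_)
      have : ∃ i, e = s(c i, c (i + 1)) := by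
        by_contra hne
        push Not at hne
        exact h ⟨he, hne, h0⟩
      obtain ⟨i, rfl⟩ := this
      refine mem_innerEdges.2 ⟨i, ⟨?_, ?_⟩, rfl⟩
      · rintro rfl
        exact h0 (Sym2.mem_mk_left _ _)
      · intro hi
        rw [hi] at h0
        exact h0 (Sym2.mem_mk_right _ _)
  · rintro (⟨z, hz, rfl⟩ | he | he)
    · exact (hl z).2 hz
    · obtain ⟨i, -, rfl⟩ := mem_innerEdges.1 he
      exact hcadj i
    · exact he.1

theorem matchGen_eq_of_subset_innerEdges (hdegc : ∀ i, i ≠ 0 → G.degree (c i) = 2)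
    {A : Finset (Sym2 V)} (hA : A ⊆ innerEdges c) :
    matchGen G A = matchPoly (fun _ => (X : ℝ[X])) A := by
  refine matchPoly_congr fun e he => ?_
  obtain ⟨i, hi, rfl⟩ := mem_innerEdges.1 (hA he)
  exact edgeWeight_eq_X (hdegc i hi.1) (hdegc _ hi.2)

theorem edgeWeight_eq_half {a b : V} (ha : G.degree a = 4) (hb : G.degree b = 2) :
    (X * C (4 * edgeM G s(a, b)) : ℝ[X]) = X * C (1 / 2) := by
  have : 4 * edgeM G s(a, b) = 1 / 2 := by
    simp only [edgeM, Sym2.lift_mk, ha, hb]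
    norm_num
  rw [this]

theorem matchGen_union (hk3 : 3 ≤ k) (hcinj : Function.Injective c)
    (hcadj : ∀ i, G.Adj (c i) (c (i + 1))) (hdegc : ∀ i, i ≠ 0 → G.degree (c i) = 2)
    {A B : Finset (Sym2 V)} (hA : A ⊆ innerEdges c) (hB : B ⊆ treeEdges G c) :
    matchGen G (A ∪ B) = matchGen G A * matchGen G B := by
  refine matchPoly_union _ (fun e he => ?_) fun e he f hf x ⟨hxe, hxf⟩ => ?_
  · obtain ⟨i, -, rfl⟩ := mem_innerEdges.1 (hA he)
    exact ⟨_, Sym2.mem_mk_left _ _⟩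
  · obtain ⟨i, -, rfl⟩ := exists_eq_of_mem_innerEdges (hA he) hxe
    exact not_mem_range_of_mem_treeEdges hk3 hcinj hcadj hdegc (hB hf) i hxf

theorem prunedGen_two_mem_intPoly {v w : ℕ → V} {t : ℕ} (ht : 2 ≤ t) (hv : IsThread G c v t)
    (hw : IsThread G c w t) (hvw : v 1 ≠ w 1)
    (hk3 : 3 ≤ k) (hcinj : Function.Injective c) (hcadj : ∀ i, G.Adj (c i) (c (i + 1)))
    (hdegu : G.degree (c 0) = 4) (hdegc : ∀ i, i ≠ 0 → G.degree (c i) = 2)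
    (hE : matchGen G G.edgeFinset ∈ intPoly) (hT : matchGen G (treeEdges G c) ∈ intPoly) :
    prunedGen G c v w 2 ∈ intPoly := by
  have h1 : (1 : ZMod k) ≠ 0 := fun h =>
    two_ne_zero_zmod hk3 (by linear_combination 2 * h)
  have hvadj : G.Adj (c 0) (v 1) := hv.start ▸ hv.adj 0 (by omega)
  have hwadj : G.Adj (c 0) (w 1) := hw.start ▸ hw.adj 0 (by omega)
  obtain ⟨hnodup, hl⟩ := nodup_and_adj_iff_mem hk3 hcinj hcadj hdegu hv.one_notMem hw.one_notMem
    hvw hvadj hwadj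
  have hB : ∀ e ∈ innerEdges c ∪ treeEdges G c, c 0 ∉ e := by
    intro e he h0
    rcases Finset.mem_union.1 he with he | he
    · obtain ⟨i, hi, h⟩ := exists_eq_of_mem_innerEdges he h0
      exact hi (hcinj h.symm)
    · exact (mem_treeEdges.1 he).2.2 h0
  have htree : ∀ i, offEdge (treeEdges G c) s(c 0, c i) = treeEdges G c := by
    intro i
    refine offEdge_eq_self fun f hf x ⟨hx, hxf⟩ => ?_
    rcases Sym2.mem_iff.1 hx with rfl | rfl <;>
      exact not_mem_range_of_mem_treeEdges hk3 hcinj hcadj hdegc hf _ hxf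
  have hinner : ∀ y ∉ Set.range c, offEdge (innerEdges c) s(c 0, y) = innerEdges c := by
    intro y hy
    refine offEdge_eq_self fun f hf x ⟨hx, hxf⟩ => ?_
    obtain ⟨i, hi, rfl⟩ := exists_eq_of_mem_innerEdges hf hxf
    rcases Sym2.mem_iff.1 hx with h | h
    · exact hi (hcinj h)
    · exact hy ⟨i, h⟩
  have hmul : ∀ {A B}, A ⊆ innerEdges c → B ⊆ treeEdges G c →
      matchGen G (A ∪ B) = matchGen G A * matchGen G B :=
    matchGen_union hk3 hcinj hcadj hdegc
  have hsubI : ∀ e, offEdge (innerEdges c) e ⊆ innerEdges c := offEdge_subset _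
  have hrefl : matchGen G (offEdge (innerEdges c) s(c 0, c (-1))) =
      matchGen G (offEdge (innerEdges c) s(c 0, c 1)) := by
    rw [matchGen_eq_of_subset_innerEdges hdegc (hsubI _),
      matchGen_eq_of_subset_innerEdges hdegc (hsubI _), matchPoly_offEdge_innerEdges hcinj]
  have hint : ∀ {A}, A ⊆ innerEdges c → matchGen G A ∈ intPoly := by
    intro A hA
    rw [matchGen_eq_of_subset_innerEdges hdegc hA]
    exact matchPoly_mem_intPoly fun _ _ => X_mem_intPoly
  have hexp : matchGen G G.edgeFinset =
      matchGen G (innerEdges c) * matchGen G (treeEdges G c) +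
      X * (matchGen G (offEdge (innerEdges c) s(c 0, c 1)) * matchGen G (treeEdges G c)) +
      X * (matchGen G (innerEdges c) * prunedGen G c v w 2) := by
    have hstar := matchPoly_insert_star (fun e => (X * C (4 * edgeM G e) : ℝ[X])) hB hnodup
    rw [← edgeFinset_eq_union hcadj hl] at hstar
    simp only [List.map_cons, List.map_nil, List.sum_cons, List.sum_nil, add_zero,
      edgeWeight_eq_half hdegu (hdegc 1 h1), edgeWeight_eq_half hdegu (hdegc _ (neg_ne_zero.2 h1)),
      edgeWeight_eq_half hdegu (hv.degree 1 le_rfl (by omega)),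
      edgeWeight_eq_half hdegu (hw.degree 1 le_rfl (by omega)),
      offEdge_union, htree, hinner _ hv.one_notMem, hinner _ hw.one_notMem,
      hv.offEdge_treeEdges ht, hw.offEdge_treeEdges ht] at hstar
    have hprune : ∀ v : ℕ → V, prunedEdges G c v 2 ⊆ treeEdges G c :=
      fun v => Finset.sdiff_subset
    have hgen : ∀ A, matchPoly (fun e => (X * C (4 * edgeM G e) : ℝ[X])) A = matchGen G A :=
      fun _ => rfl
    simp only [hgen] at hstar
    rw [hstar, hmul subset_rfl subset_rfl, hmul (hsubI _) subset_rfl,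
      hmul (hsubI _) subset_rfl, hmul subset_rfl (hprune v), hmul subset_rfl (hprune w), hrefl,
      prunedGen]
    have hC : (C (1 / 2) : ℝ[X]) + C (1 / 2) = 1 := by
      rw [← C_add]
      norm_num
    linear_combination (X * (matchGen G (offEdge (innerEdges c) s(c 0, c 1)) *
      matchGen G (treeEdges G c))) * hC
  have hmem : X * (matchGen G (innerEdges c) * prunedGen G c v w 2) ∈ intPoly := by
    rw [← sub_eq_iff_eq_add'.2 hexp]
    exact Subring.sub_mem _ hE (Subring.add_mem _ (Subring.mul_mem _ (hint subset_rfl) hT)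
      (Subring.mul_mem _ X_mem_intPoly (Subring.mul_mem _ (hint (hsubI _)) hT)))
  refine mem_intPoly_of_mul (hint subset_rfl) ?_ (mem_intPoly_of_X_mul hmem)
  rw [coeff_matchGen, matchSum_zero, pow_zero, one_mul]

end CycleEdges

/-- In the cycle-plus-tree setting, if `G` is periodic and
`deg v₁ = … = deg v_t = deg w₁ = … = deg w_t = 2`, then for every `1 ≤ i ≤ t`:
(1) `2^(2i)·K_(2i) ∈ ℤ`; (2) `2^(2(i-1)-1)·L_(2(i-1))(2) ∈ ℤ`; and (3) for every
`2 ≤ j ≤ i-1`, `2^(2(i-j)-1)·L_(2(i-j))(2,…,j+1) ∈ ℤ`. -/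
theorem int_Km_Lm {V : Type*} [Fintype V] [DecidableEq V] (G : SimpleGraph V)
    (hconn : G.Connected) (k : ℕ) [NeZero k] (hk3 : 3 ≤ k) (hkodd : Odd k)
    (c : ZMod k → V) (hcinj : Function.Injective c)
    (hcadj : ∀ i : ZMod k, G.Adj (c i) (c (i + 1)))
    (hcard : Fintype.card V = G.edgeFinset.card)
    (hdegu : G.degree (c 0) = 4) (hdegc : ∀ i : ZMod k, i ≠ 0 → G.degree (c i) = 2)
    (hper : IsPeriodic G)
    (t : ℕ) (ht : 1 ≤ t)
    (v w : ℕ → V) (hv0 : v 0 = c 0) (hw0 : w 0 = c 0)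
    (hvadj : ∀ s : ℕ, s < t → G.Adj (v s) (v (s + 1)))
    (hwadj : ∀ s : ℕ, s < t → G.Adj (w s) (w (s + 1)))
    (hv1 : v 1 ∉ Set.range c) (hw1 : w 1 ∉ Set.range c) (hvw : v 1 ≠ w 1)
    (hvnb : ∀ s : ℕ, s + 2 ≤ t → v (s + 2) ≠ v s)
    (hwnb : ∀ s : ℕ, s + 2 ≤ t → w (s + 2) ≠ w s)
    (hvdeg : ∀ s : ℕ, 1 ≤ s → s ≤ t → G.degree (v s) = 2)
    (hwdeg : ∀ s : ℕ, 1 ≤ s → s ≤ t → G.degree (w s) = 2) :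
    ∀ i : ℕ, 1 ≤ i → i ≤ t →
      (∃ m : ℤ, (2 : ℝ) ^ (2 * i) * Km G c i = (m : ℝ)) ∧
      (∃ m : ℤ, (2 : ℝ) ^ (2 * ((i : ℤ) - 1) - 1) * Lm G c v w (i - 1) 2 = (m : ℝ)) ∧
      (∀ j : ℕ, 2 ≤ j → j ≤ i - 1 →
        ∃ m : ℤ, (2 : ℝ) ^ (2 * ((i : ℤ) - (j : ℤ)) - 1) * Lm G c v w (i - j) (j + 1)
          = (m : ℝ)) := by
  have hcard' : Nat.card V = Nat.card G.edgeSet := by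
    rw [Nat.card_eq_fintype_card, hcard, SimpleGraph.edgeFinset, Set.toFinset_card,
      Nat.card_eq_fintype_card]
  have hv : IsThread G c v t := ⟨hv0, hvadj, hv1, hvnb, hvdeg⟩
  have hw : IsThread G c w t := ⟨hw0, hwadj, hw1, hwnb, hwdeg⟩
  obtain ⟨hE, hT⟩ :=
    matchGen_mem_intPoly hconn hk3 hkodd hcinj hcadj hcard' hdegu hdegc hper
  have h2 : 2 ≤ t → prunedGen G c v w 2 ∈ intPoly := fun ht2 =>
    prunedGen_two_mem_intPoly ht2 hv hw hvw hk3 hcinj hcadj hdegu hdegc hE hT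
  have hpow : ∀ n : ℕ, (2 : ℝ) ^ (2 * (n : ℤ) - 1) = 1 / 2 * 4 ^ n := by
    intro n
    rw [zpow_sub_one₀ two_ne_zero, _root_.zpow_mul, zpow_natCast]
    norm_num
    ring
  have hL : ∀ n r : ℕ, prunedGen G c v w r ∈ intPoly →
      ∃ m : ℤ, (2 : ℝ) ^ (2 * (n : ℤ) - 1) * Lm G c v w n r = m := by
    intro n r h
    obtain ⟨m, hm⟩ := mem_intPoly.1 h n
    exact ⟨m, by rw [← hm, coeff_prunedGen, hpow, mul_assoc]⟩
  intro i hi hit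
  refine ⟨?_, ?_, fun j hj hji => ?_⟩
  · obtain ⟨m, hm⟩ := mem_intPoly.1 hT i
    refine ⟨m, ?_⟩
    rw [← hm, coeff_matchGen, pow_mul, Km]
    norm_num
  · rw [← Nat.cast_pred hi]
    rcases hi.eq_or_lt with rfl | hi2
    · refine ⟨1, ?_⟩
      rw [hpow, Nat.sub_self, Lm, Kg, Kg, matchSum_zero, matchSum_zero]
      norm_num
    · exact hL _ _ (h2 (by omega))
  · rw [← Nat.cast_sub (by omega)]
    obtain ⟨r, rfl⟩ := Nat.exists_eq_add_of_le' hj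
    exact hL _ _ (prunedGen_mem_intPoly (r := r + 1) hv hw hconn hk3 hcinj hcadj hcard' hdegc hT h2
      (by omega))

end GroverPaper
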